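/- arXiv:0711.2468 — 10 statements merged into one kernel-verified Lean document; each statement's English description precedes it below -/
import Mathlib

section
/- The automorphism group of the generalized quaternion group Q4 of order 16 is isomorphic to the holomorph Hol(C8) of the cyclic group of order 8. -/
/-!
Write `Q4 = {a i} ∪ {xa i}` with `i ∈ ℤ/8`. A pair `(c, σ)` in the holomorph of `ℤ/8` acts on `Q4`
by `a i ↦ a (σ i)`, `xa i ↦ xa (c + σ i)`. This respects `xa i * xa j = a (4 + j - i)` because `σ`
fixes `4`, the only element of order two (`affineAut`), and it is multiplicative in `(c, σ)` because
the holomorph composes affine maps.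

The resulting homomorphism `holToAut` is clearly injective. It is surjective because an automorphism
`f` sends `a 1`, of order 8, to an element of order 8, hence into `⟨a⟩`, as every `xa i` has order 4
(`exists_map_a`). So `f` restricts to an automorphism `σ` of `⟨a⟩ ≅ ℤ/8`, it sends `xa 0` to some
`xa c`, and these two data determine `f` on `xa i = xa 0 * a i`.
-/

/-- The holomorph of a group `G`: the semidirect product `G ⋊ Aut G` with the natural action. -/
abbrev Hol (G : Type*) [Group G] : Type _ :=
  SemidirectProduct G (MulAut G) (MonoidHom.id (MulAut G))

namespace AutQ4

open QuaternionGroup Multiplicative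

/-- The cyclic group of order 8, with the modulus in the form used by `QuaternionGroup 4`. -/
abbrev C8 : Type := Multiplicative (ZMod (2 * 4))

/-- An automorphism of the cyclic group of order 8 fixes its unique involution. -/
theorem map_four (σ : MulAut C8) : σ (ofAdd 4) = ofAdd 4 := by
  have unique : ∀ x : C8, x * x = 1 → x ≠ 1 → x = ofAdd 4 := by decide
  refine unique _ ?_ ?_
  · rw [← map_mul, show (ofAdd 4 * ofAdd 4 : C8) = 1 by decide, map_one]
  · rw [Ne, map_eq_one_iff σ σ.injective]
    decide

/-- The map underlying the action of the holomorph of `ℤ/8` on `Q4`: the automorphism `σ` on the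
exponents of `a i`, and the affine map `i ↦ c + σ i` on the exponents of `xa i`. -/
def affineMap (g : Hol C8) : QuaternionGroup 4 → QuaternionGroup 4
  | a i => a (toAdd (g.right (ofAdd i)))
  | xa i => xa (toAdd (g.left * g.right (ofAdd i)))

theorem affineMap_mul (g h : Hol C8) (q : QuaternionGroup 4) :
    affineMap (g * h) q = affineMap g (affineMap h q) := by
  cases q <;> simp [affineMap, add_assoc]

theorem affineMap_one (q : QuaternionGroup 4) : affineMap 1 q = q := by
  cases q <;> simp [affineMap]

theorem affineMap_map_mul (g : Hol C8) (p q : QuaternionGroup 4) :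
    affineMap g (p * q) = affineMap g p * affineMap g q := by
  rcases p with i | i <;> rcases q with j | j
  · simp [affineMap]
  · simp [affineMap, add_sub_assoc]
  · simp [affineMap, add_assoc]
  · have h : g.right (ofAdd ((4 : ℕ) : ZMod (2 * 4))) = ofAdd 4 := map_four g.right
    simp only [affineMap, xa_mul_xa, ofAdd_sub, ofAdd_add, map_mul, map_div, h, toAdd_mul,
      toAdd_div, toAdd_ofAdd]
    congr 1
    push_cast
    abel

/-- The automorphism of `Q4` given by an element of the holomorph of `ℤ/8`. -/
def affineAut (g : Hol C8) : MulAut (QuaternionGroup 4) where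
  toFun := affineMap g
  invFun := affineMap g⁻¹
  left_inv q := by rw [← affineMap_mul, inv_mul_cancel, affineMap_one]
  right_inv q := by rw [← affineMap_mul, mul_inv_cancel, affineMap_one]
  map_mul' := affineMap_map_mul g

/-- The action of the holomorph of `ℤ/8` on `Q4` by automorphisms. -/
def holToAut : Hol C8 →* MulAut (QuaternionGroup 4) where
  toFun := affineAut
  map_one' := MulEquiv.ext affineMap_one
  map_mul' g h := MulEquiv.ext (affineMap_mul g h)

theorem holToAut_injective : Function.Injective holToAut := by
  intro g h hgh
  have key : ∀ q, affineMap g q = affineMap h q := fun q => DFunLike.congr_fun hgh q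
  have hr : g.right = h.right := MulEquiv.ext fun i => by
    have := key (a (toAdd i))
    simpa [affineMap] using this
  have hl : g.left = h.left := by
    have := key (xa 0)
    simpa [affineMap] using this
  exact SemidirectProduct.ext hl hr

/-- An automorphism of `Q4` preserves the cyclic subgroup of order 8. -/
theorem exists_map_a (f : MulAut (QuaternionGroup 4)) (i : ZMod (2 * 4)) :
    ∃ j, f (a i) = a j := by
  obtain ⟨u, hu⟩ : ∃ u, f (a 1) = a u := by
    rcases h : f (a 1) with u | u
    · exact ⟨u, rfl⟩
    · have h1 : orderOf (f (a 1)) = 2 * 4 := (f.orderOf_eq _).trans orderOf_a_one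
      rw [h, orderOf_xa] at h1
      omega
  refine ⟨((u.val * i.val : ℕ) : ZMod (2 * 4)), ?_⟩
  rw [← ZMod.natCast_zmod_val i, ← a_one_pow, map_pow, hu, ← ZMod.natCast_zmod_val u, ← a_one_pow,
    ← pow_mul, a_one_pow]
  simp

theorem holToAut_surjective : Function.Surjective holToAut := by
  intro f
  choose s hs using exists_map_a f
  let φ : C8 →* C8 := MonoidHom.mk' (fun i => ofAdd (s (toAdd i))) fun i j => by
    have h : a (s (toAdd i + toAdd j)) = a (s (toAdd i) + s (toAdd j)) := by
      rw [← hs, ← a_mul_a, map_mul, hs, hs, a_mul_a]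
    exact congrArg ofAdd (a.inj h)
  have hinj : Function.Injective φ := fun i j hij => by
    have h : s (toAdd i) = s (toAdd j) := hij
    have h' : f (a (toAdd i)) = f (a (toAdd j)) := by rw [hs, hs, h]
    exact a.inj (f.injective h')
  have hbij : Function.Bijective φ := Finite.injective_iff_bijective.mp hinj
  -- `f` already maps `⟨a⟩` onto itself, so `xa 0` has to go to its complement.
  obtain ⟨c, hc⟩ : ∃ c, f (xa 0) = xa c := by
    rcases h : f (xa 0) with c | c
    · obtain ⟨i, hi⟩ := hbij.2 (ofAdd c)
      have hi' : s (toAdd i) = c := hi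
      have h' : f (a (toAdd i)) = f (xa 0) := by rw [hs, hi', h]
      cases f.injective h'
    · exact ⟨c, rfl⟩
  refine ⟨⟨ofAdd c, MulEquiv.ofBijective φ hbij⟩, MulEquiv.ext fun q => ?_⟩
  rcases q with i | i
  · exact (hs i).symm
  · have h : f (xa i) = xa (c + s i) := by
      rw [← xa_mul_a, ← hs, ← hc, ← map_mul, xa_mul_a, zero_add]
    exact h.symm

end AutQ4

/-- The automorphism group of the generalized quaternion group `Q4` of order 16 is isomorphic
to the holomorph of the cyclic group of order 8. -/
theorem aut_Q4_iso_hol_C8 :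
    Nonempty (MulAut (QuaternionGroup 4) ≃* Hol (Multiplicative (ZMod 8))) := by
  exact ⟨(MulEquiv.ofBijective AutQ4.holToAut
    ⟨AutQ4.holToAut_injective, AutQ4.holToAut_surjective⟩).symm⟩
end

section
/- The automorphism group of the semidihedral (quasi-dihedral) group QD8 of order 16 is isomorphic to D4 × C2, where D4 denotes the dihedral group of order 8. -/
/-!
Write `a`, `b` for the generators of `QD8`. An automorphism sends `a` to an element of order 8,
that is, to `a ^ i` with `i` odd, and `b` to an involution outside `⟨a⟩`, that is, to `a ^ j * b`
with `j` even. Conversely, every such pair `(i, j)` comes from the automorphism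
`a ^ x * b ^ y ↦ a ^ (i * x + j * y) * b ^ y`, and composition is that of the affine maps
`t ↦ i * t + j`. So the automorphism group is `2ℤ/8 ⋊ (ℤ/8)ˣ`. Here `-1` acts on `2ℤ/8 ≅ C4` by
inversion and `5` acts trivially, so that `C4 ⋊ {±1} = D4` and `{1, 5} = C2` are the two direct
factors.

Concretely, `D4 × C2` acts on `QD8` by these automorphisms (`slopeQD` and `shiftQD` give `i` and
`j`), and the resulting homomorphism to `MulAut QD8` is bijective, because an automorphism is determined
by the images of `a` and `b`.
-/

/-- Monoid hom from `Multiplicative (ZMod n)` sending the canonical generator to `σ`,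
given that `σ ^ n = 1`. -/
def zmodHom {M : Type*} [Monoid M] (n : ℕ) [NeZero n] (σ : M) (h : σ ^ n = 1) :
    Multiplicative (ZMod n) →* M where
  toFun c := σ ^ (Multiplicative.toAdd c).val
  map_one' := by simp
  map_mul' a b := by
    simp only [toAdd_mul]
    rw [ZMod.val_add, ← pow_eq_pow_mod _ h, pow_add]

/-- The additive automorphism `x ↦ 3 * x` of `ZMod 8`. -/
def mulThree : ZMod 8 ≃+ ZMod 8 where
  toFun x := 3 * x
  invFun x := 3 * x
  left_inv := by intro x; revert x; decide
  right_inv := by intro x; revert x; decide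
  map_add' a b := mul_add 3 a b

/-- `x ↦ 3 * x` as an automorphism of the multiplicative cyclic group of order 8. -/
def sigmaThree : MulAut (Multiplicative (ZMod 8)) :=
  AddEquiv.toMultiplicative mulThree

lemma sigmaThree_sq : sigmaThree ^ 2 = 1 := by
  rw [sq]
  exact MulEquiv.ext fun x => mulThree.left_inv (Multiplicative.toAdd x)

/-- The semidihedral (quasi-dihedral) group `QD8` of order 16, realized as the semidirect
product `C8 ⋊ C2` where the nontrivial element of `C2` acts by `x ↦ 3 * x`. -/
abbrev QD8 : Type :=
  SemidirectProduct (Multiplicative (ZMod 8)) (Multiplicative (ZMod 2))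
    (zmodHom 2 sigmaThree sigmaThree_sq)

/-- `D4 × C2`, with `C2` written multiplicatively. -/
abbrev D4C2 : Type := DihedralGroup 4 × Multiplicative (ZMod 2)

/-- The exponent `i` in `a ↦ a ^ i`: rotations of `D4` have slope `1`, reflections `-1`, and the
generator of `C2` contributes the factor `5`. -/
def slopeQD : D4C2 → ZMod 8
  | (.r _, c) => 1 + 4 * (c.toAdd.val : ZMod 8)
  | (.sr _, c) => -(1 + 4 * (c.toAdd.val : ZMod 8))

/-- The exponent `j` in `b ↦ a ^ j * b`. The rotation `r k` has shift `2 * k`; the sign for `sr k`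
comes from `sr k = sr 0 * r k`, where `sr 0` has shift `0` and slope `-1`. -/
def shiftQD : D4C2 → ZMod 8
  | (.r k, _) => 2 * (k.val : ZMod 8)
  | (.sr k, _) => -(2 * (k.val : ZMod 8))

lemma slopeQD_mul : ∀ p q, slopeQD (p * q) = slopeQD p * slopeQD q := by decide

lemma shiftQD_mul : ∀ p q, shiftQD (p * q) = slopeQD p * shiftQD q + shiftQD p := by decide

lemma four_mul_shiftQD : ∀ p, 4 * shiftQD p = 0 := by decide

/-- The element `a ^ x * b ^ y` of `QD8`. -/
def mkQD (x : ZMod 8) (y : ZMod 2) : QD8 := ⟨.ofAdd x, .ofAdd y⟩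

lemma mkQD_mul (x x' : ZMod 8) (y y' : ZMod 2) :
    mkQD x y * mkQD x' y' = mkQD (x + 3 ^ y.val * x') (y + y') := by
  have key : ∀ (x' : ZMod 8) (y : ZMod 2),
      zmodHom 2 sigmaThree sigmaThree_sq (.ofAdd y) (.ofAdd x') = .ofAdd (3 ^ y.val * x') := by
    decide
  exact SemidirectProduct.ext (congrArg (Multiplicative.ofAdd x * ·) (key x' y)) rfl

lemma mkQD_inj {x x' : ZMod 8} {y y' : ZMod 2} : mkQD x y = mkQD x' y' ↔ x = x' ∧ y = y' :=
  SemidirectProduct.ext_iff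

lemma mkQD_one : mkQD 0 0 = 1 := rfl

lemma exists_mkQD (g : QD8) : ∃ x y, g = mkQD x y := ⟨g.left.toAdd, g.right.toAdd, rfl⟩

/-- The action of `D4 × C2` on `QD8` by `a ^ x * b ^ y ↦ a ^ (i * x + j * y) * b ^ y`, where `i` is
the slope and `j` the shift. -/
instance actQD : MulDistribMulAction D4C2 QD8 where
  smul p g :=
    mkQD (slopeQD p * g.left.toAdd + shiftQD p * (g.right.toAdd.val : ZMod 8)) g.right.toAdd
  one_smul g := by
    obtain ⟨x, y, rfl⟩ := exists_mkQD g
    change mkQD (slopeQD 1 * x + shiftQD 1 * (y.val : ZMod 8)) y = _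
    rw [show slopeQD 1 = 1 by decide, show shiftQD 1 = 0 by decide]
    simp
  mul_smul p q g := by
    obtain ⟨x, y, rfl⟩ := exists_mkQD g
    change mkQD (slopeQD (p * q) * x + shiftQD (p * q) * (y.val : ZMod 8)) y =
      mkQD (slopeQD p * (slopeQD q * x + shiftQD q * (y.val : ZMod 8)) +
        shiftQD p * (y.val : ZMod 8)) y
    rw [slopeQD_mul, shiftQD_mul]
    congr 1
    ring
  smul_one p := by
    change mkQD (slopeQD p * 0 + shiftQD p * ((0 : ℕ) : ZMod 8)) 0 = mkQD 0 0
    simp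
  smul_mul p g h := by
    obtain ⟨x, y, rfl⟩ := exists_mkQD g
    obtain ⟨x', y', rfl⟩ := exists_mkQD h
    rw [mkQD_mul]
    change mkQD (slopeQD p * (x + 3 ^ y.val * x') + shiftQD p * ((y + y').val : ZMod 8)) (y + y') =
      mkQD (slopeQD p * x + shiftQD p * (y.val : ZMod 8)) y *
        mkQD (slopeQD p * x' + shiftQD p * (y'.val : ZMod 8)) y'
    rw [mkQD_mul]
    congr 1
    -- `y + 3 ^ y * y'` and `y + y'` (the latter reduced mod 2) agree modulo 4.
    have key : ∀ y y' : ZMod 2, ∃ m : ZMod 8,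
        (y.val : ZMod 8) + 3 ^ y.val * (y'.val : ZMod 8) = ((y + y').val : ZMod 8) + 4 * m := by
      decide
    obtain ⟨m, hm⟩ := key y y'
    linear_combination -shiftQD p * hm - m * four_mul_shiftQD p

lemma smul_mkQD (p : D4C2) (x : ZMod 8) (y : ZMod 2) :
    p • mkQD x y = mkQD (slopeQD p * x + shiftQD p * (y.val : ZMod 8)) y := rfl

lemma mkQD_sq (x : ZMod 8) (y : ZMod 2) : mkQD x y ^ 2 = mkQD (x + 3 ^ y.val * x) 0 := by
  rw [sq, mkQD_mul, CharTwo.add_self_eq_zero]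

lemma mkQD_pow_four (x : ZMod 8) (y : ZMod 2) :
    mkQD x y ^ 4 = mkQD (2 * (x + 3 ^ y.val * x)) 0 := by
  rw [show 4 = 2 * 2 from rfl, pow_mul, mkQD_sq, mkQD_sq]
  congr 1
  simp
  ring

lemma mkQD_eq_pow (x : ZMod 8) (y : ZMod 2) : mkQD x y = mkQD 1 0 ^ x.val * mkQD 0 1 ^ y.val := by
  have h1 : ∀ n : ℕ, mkQD 1 0 ^ n = mkQD n 0 := by
    intro n
    induction n with
    | zero => simp [mkQD_one]
    | succ n ih => rw [pow_succ, ih, mkQD_mul]; simp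
  have h2 : ∀ y : ZMod 2, mkQD 0 1 ^ y.val = mkQD 0 y := by
    intro y
    fin_cases y
    · rfl
    · exact pow_one _
  rw [h1, h2, mkQD_mul]
  simp

/-- Automorphisms of `QD8` that agree on `a` and `b` are equal. -/
lemma mulAut_ext {f g : MulAut QD8} (ha : f (mkQD 1 0) = g (mkQD 1 0))
    (hb : f (mkQD 0 1) = g (mkQD 0 1)) : f = g := by
  refine MulEquiv.ext fun z => ?_
  obtain ⟨x, y, rfl⟩ := exists_mkQD z
  rw [mkQD_eq_pow, map_mul, map_mul, map_pow, map_pow, map_pow, map_pow, ha, hb]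

/-- In coordinates: if `u = a ^ x * b ^ y` has order 8 and `v = a ^ z * b ^ w` is an involution
other than `u ^ 4`, then some element of `D4 × C2` takes `a` to `u` and `b` to `v`. -/
lemma exists_param : ∀ (x : ZMod 8) (y : ZMod 2) (z : ZMod 8) (w : ZMod 2),
    2 * (x + 3 ^ y.val * x) ≠ 0 → z + 3 ^ w.val * z = 0 → ¬ (z = 0 ∧ w = 0) →
    ¬ (z = 2 * (x + 3 ^ y.val * x) ∧ w = 0) →
    ∃ p : D4C2, (slopeQD p = x ∧ 0 = y) ∧ shiftQD p = z ∧ 1 = w := by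
  decide

/-- The automorphism group of the semidihedral group of order 16 is isomorphic to `D4 × C2`. -/
theorem aut_QD8_iso_D4_prod_C2 :
    Nonempty (MulAut QD8 ≃* DihedralGroup 4 × Multiplicative (ZMod 2)) := by
  refine ⟨(MulEquiv.ofBijective (MulDistribMulAction.toMulAut D4C2 QD8) ⟨?_, ?_⟩).symm⟩
  · intro p q h
    have ha : p • mkQD 1 0 = q • mkQD 1 0 := DFunLike.congr_fun h (mkQD 1 0)
    have hb : p • mkQD 0 1 = q • mkQD 0 1 := DFunLike.congr_fun h (mkQD 0 1)
    simp only [smul_mkQD, mkQD_inj] at ha hb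
    have key : ∀ p q : D4C2, slopeQD p = slopeQD q → shiftQD p = shiftQD q → p = q := by decide
    exact key p q (by simpa using ha) (by simpa [ZMod.val_one] using hb)
  · intro f
    obtain ⟨x, y, hu⟩ := exists_mkQD (f (mkQD 1 0))
    obtain ⟨z, w, hv⟩ := exists_mkQD (f (mkQD 0 1))
    have hu4 : f (mkQD 1 0 ^ 4) = mkQD (2 * (x + 3 ^ y.val * x)) 0 := by
      rw [map_pow, hu, mkQD_pow_four]
    have hv2 : f (mkQD 0 1 ^ 2) = mkQD (z + 3 ^ w.val * z) 0 := by
      rw [map_pow, hv, mkQD_sq]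
    rw [mkQD_pow_four] at hu4
    rw [mkQD_sq] at hv2
    obtain ⟨p, hpa, hpb⟩ := exists_param x y z w
      (fun h => by
        rw [h, mkQD_one, map_eq_one_iff f f.injective, ← mkQD_one, mkQD_inj] at hu4
        exact absurd hu4.1 (by decide))
      (by
        simp only [mul_zero, add_zero, mkQD_one, map_one] at hv2
        rw [← mkQD_one, mkQD_inj] at hv2
        exact hv2.1.symm)
      (fun h => by
        rw [h.1, h.2, mkQD_one, map_eq_one_iff f f.injective, ← mkQD_one, mkQD_inj] at hv
        exact absurd hv.2 (by decide))
      (fun h => by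
        rw [h.1, h.2, ← hu4, f.injective.eq_iff, mkQD_inj] at hv
        exact absurd hv.2 (by decide))
    refine ⟨p, mulAut_ext ?_ ?_⟩
    · rw [hu]
      change p • mkQD 1 0 = _
      rw [smul_mkQD, mkQD_inj]
      simpa using hpa
    · rw [hv]
      change p • mkQD 0 1 = _
      rw [smul_mkQD, mkQD_inj]
      simpa [ZMod.val_one] using hpb
end

section
/- The automorphism group of the modular group of order 16 (the group <2,2|2> with presentation a^8 = b^2 = 1, a^b = a^5) is isomorphic to D4 × C2, where D4 denotes the dihedral group of order 8. -/
/-- The additive automorphism `x ↦ 5 * x` of `ZMod 8`. -/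
def mulFive : ZMod 8 ≃+ ZMod 8 where
  toFun x := 5 * x
  invFun x := 5 * x
  left_inv := by intro x; revert x; decide
  right_inv := by intro x; revert x; decide
  map_add' a b := mul_add 5 a b

/-- `x ↦ 5 * x` as an automorphism of the multiplicative cyclic group of order 8. -/
def sigmaFive : MulAut (Multiplicative (ZMod 8)) :=
  AddEquiv.toMultiplicative mulFive

lemma sigmaFive_sq : sigmaFive ^ 2 = 1 := by
  rw [sq]
  exact MulEquiv.ext fun x => mulFive.left_inv (Multiplicative.toAdd x)

/-- The modular group of order 16 (the group `<2,2|2>`), realized as the semidirect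
product `C8 ⋊ C2` where the nontrivial element of `C2` acts by `x ↦ 5 * x`. -/
abbrev Mod16 : Type :=
  SemidirectProduct (Multiplicative (ZMod 8)) (Multiplicative (ZMod 2))
    (zmodHom 2 sigmaFive sigmaFive_sq)

/-- The homomorphism `DihedralGroup n →* M` with `r 1 ↦ x` and `sr 0 ↦ y`, given the dihedral
relations. -/
def dihedralHom {M : Type*} [Group M] (n : ℕ) [NeZero n] (x y : M) (hx : x ^ n = 1)
    (hy : y * y = 1) (hxy : x * y = y * x⁻¹) : DihedralGroup n →* M :=
  have key : ∀ i : ZMod n, zmodHom n x hx (.ofAdd i) * y = y * zmodHom n x hx (.ofAdd (-i)) := by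
    intro i
    rw [ofAdd_neg, map_inv]
    change x ^ i.val * y = y * (x ^ i.val)⁻¹
    rw [← inv_pow]
    exact ((SemiconjBy.pow_right (show SemiconjBy y x⁻¹ x from hxy.symm) i.val).eq).symm
  { toFun := fun d => match d with
      | .r i => zmodHom n x hx (.ofAdd i)
      | .sr i => y * zmodHom n x hx (.ofAdd i)
    map_one' := map_one (zmodHom n x hx)
    map_mul' := by
      rintro (i | i) (j | j)
      · simp only [DihedralGroup.r_mul_r, ofAdd_add, map_mul]
      · simp only [DihedralGroup.r_mul_sr]
        rw [← mul_assoc, key, mul_assoc, ← map_mul, ← ofAdd_add, neg_add_eq_sub]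
      · simp only [DihedralGroup.sr_mul_r, ofAdd_add, map_mul, mul_assoc]
      · simp only [DihedralGroup.sr_mul_sr]
        rw [mul_assoc, ← mul_assoc _ y, key, ← mul_assoc, ← mul_assoc, hy, one_mul, ← map_mul,
          ← ofAdd_add, neg_add_eq_sub] }

namespace Mod16

/-- The generator of order 8. -/
def a : Mod16 := ⟨.ofAdd 1, 1⟩

/-- The generator of order 2. -/
def b : Mod16 := ⟨1, .ofAdd 1⟩

lemma forall_iff {p : Mod16 → Prop} :
    (∀ g, p g) ↔ ∀ (x : ZMod 8) (y : ZMod 2), p ⟨.ofAdd x, .ofAdd y⟩ :=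
  ⟨fun h _ _ => h _, fun h g => h g.left.toAdd g.right.toAdd⟩

lemma eq_pow_mul_pow : ∀ g : Mod16, g = a ^ g.left.toAdd.val * b ^ g.right.toAdd.val := by
  rw [forall_iff]
  decide

lemma hom_ext {M : Type*} [Monoid M] {f g : Mod16 →* M} (ha : f a = g a) (hb : f b = g b) :
    f = g := by
  refine MonoidHom.ext fun x => ?_
  rw [eq_pow_mul_pow x, map_mul, map_mul, map_pow, map_pow, map_pow, map_pow, ha, hb]

lemma aut_ext {f g : MulAut Mod16} (ha : f a = g a) (hb : f b = g b) : f = g :=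
  MulEquiv.toMonoidHom_injective (hom_ext ha hb)

/-- The endomorphism with `a ↦ u` and `b ↦ v`, given the defining relations. -/
def endo (u v : Mod16) (hu : u ^ 8 = 1) (hv : v ^ 2 = 1) (huv : v * u * v⁻¹ = u ^ 5) :
    Mod16 →* Mod16 :=
  SemidirectProduct.lift (zmodHom 8 u hu) (zmodHom 2 v hv) (by
    intro g
    refine MonoidHom.ext fun x => ?_
    have hval : ∀ x : ZMod 8, (5 * x).val = 5 * x.val % 8 := by decide
    have h5 : ∀ x : ZMod 8, u ^ (5 * x).val = v * u ^ x.val * v⁻¹ := by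
      intro x
      rw [← conj_pow, huv, ← pow_mul, hval, ← pow_eq_pow_mod _ hu]
    obtain rfl | rfl : g = 1 ∨ g = .ofAdd 1 := by
      revert g; decide
    · simp
    · have hv1 : zmodHom 2 v hv (.ofAdd 1) = v := pow_one v
      simp only [MonoidHom.comp_apply, MulEquiv.coe_toMonoidHom, MulAut.conj_apply, hv1]
      exact h5 _)

/-- The automorphism `a ↦ a * b`, `b ↦ a ^ 4 * b`, of order 4. -/
def rho : MulAut Mod16 :=
  MonoidHom.toMulEquiv
    (endo (a * b) (a ^ 4 * b) (by decide) (by decide) (by decide))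
    (endo (a ^ 5 * b) (a ^ 4 * b) (by decide) (by decide) (by decide))
    (hom_ext (by decide) (by decide)) (hom_ext (by decide) (by decide))

/-- The automorphism `a ↦ a`, `b ↦ a ^ 4 * b`, which is conjugation by `a`. -/
def sigma : MulAut Mod16 :=
  MonoidHom.toMulEquiv
    (endo a (a ^ 4 * b) (by decide) (by decide) (by decide))
    (endo a (a ^ 4 * b) (by decide) (by decide) (by decide))
    (hom_ext (by decide) (by decide)) (hom_ext (by decide) (by decide))

/-- The automorphism `a ↦ a⁻¹`, `b ↦ a ^ 4 * b`, which is central in the automorphism group. -/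
def zeta : MulAut Mod16 :=
  MonoidHom.toMulEquiv
    (endo a⁻¹ (a ^ 4 * b) (by decide) (by decide) (by decide))
    (endo a⁻¹ (a ^ 4 * b) (by decide) (by decide) (by decide))
    (hom_ext (by decide) (by decide)) (hom_ext (by decide) (by decide))

/-- The action of `D4` on `Mod16` through `rho` and `sigma`. -/
def dihedralToAut : DihedralGroup 4 →* MulAut Mod16 :=
  dihedralHom 4 rho sigma (aut_ext (by decide) (by decide)) (aut_ext (by decide) (by decide))
    (aut_ext (by decide) (by decide))

/-- The action of `C2` on `Mod16` through `zeta`. -/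
def cyclicToAut : Multiplicative (ZMod 2) →* MulAut Mod16 :=
  zmodHom 2 zeta (aut_ext (by decide) (by decide))

lemma commute_toAut (d : DihedralGroup 4) (c : Multiplicative (ZMod 2)) :
    Commute (dihedralToAut d) (cyclicToAut c) := by
  have hr : Commute rho zeta := aut_ext (by decide) (by decide)
  have hs : Commute sigma zeta := aut_ext (by decide) (by decide)
  obtain i | i := d
  · exact hr.pow_pow _ _
  · exact (hs.pow_right _).mul_left (hr.pow_pow _ _)

/-- The homomorphism `D4 × C2 →* MulAut Mod16` generated by `rho`, `sigma` and `zeta`. -/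
def toAut : DihedralGroup 4 × Multiplicative (ZMod 2) →* MulAut Mod16 :=
  dihedralToAut.noncommCoprod cyclicToAut commute_toAut

lemma toAut_injective : Function.Injective toAut := by
  rw [injective_iff_map_eq_one]
  have key : ∀ d, toAut d a = a → toAut d b = b → d = 1 := by
    decide
  intro d hd
  exact key d (by rw [hd]; rfl) (by rw [hd]; rfl)

set_option synthInstance.maxHeartbeats 200000 in
set_option synthInstance.maxSize 1000 in
set_option maxRecDepth 100000 in
/-- The elements of order 8 are those with `u ^ 4 ≠ 1`, so every pair that could be the image of
`(a, b)` under an automorphism is realized by `toAut`. -/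
lemma exists_toAut : ∀ u v : Mod16, u ^ 4 ≠ 1 → v ^ 2 = 1 → v * u ≠ u * v →
    ∃ d, toAut d a = u ∧ toAut d b = v := by
  rw [forall_iff]
  intro x y
  rw [forall_iff]
  revert x y
  decide

lemma toAut_surjective : Function.Surjective toAut := by
  intro f
  obtain ⟨d, ha, hb⟩ := exists_toAut (f a) (f b)
    (by rw [← map_pow, ne_eq, map_eq_one_iff f f.injective]; decide)
    (by rw [← map_pow, map_eq_one_iff f f.injective]; decide)
    (by rw [← map_mul, ← map_mul, f.injective.ne_iff]; decide)
  exact ⟨d, aut_ext ha hb⟩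

end Mod16

/-- The automorphism group of the modular group of order 16 is isomorphic to `D4 × C2`. -/
theorem aut_modular16_iso_D4_prod_C2 :
    Nonempty (MulAut Mod16 ≃* DihedralGroup 4 × Multiplicative (ZMod 2)) := by
  exact ⟨(MulEquiv.ofBijective Mod16.toAut
    ⟨Mod16.toAut_injective, Mod16.toAut_surjective⟩).symm⟩
end

section
/- The automorphism group of D4 × C2, where D4 is the dihedral group of order 8, is isomorphic to the holomorph Hol(C4 × C2) of the abelian group C4 × C2 (a group of order 64). -/
namespace AutD4C2

/-- The group `D4 × C2`. -/
abbrev G : Type := DihedralGroup 4 × Multiplicative (ZMod 2)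

/-- The group `C4 × C2`. -/
abbrev A : Type := Multiplicative (ZMod 4 × ZMod 2)

/-- The embedding of `C4 × C2` into `D4 × C2` as the rotations times `C2`. -/
def rot : A →* G where
  toFun b := (DihedralGroup.r b.toAdd.1, Multiplicative.ofAdd b.toAdd.2)
  map_one' := rfl
  map_mul' _ _ := rfl

/-- A reflection in `D4 × C2`. -/
def s : G := (DihedralGroup.sr 0, 1)

lemma rot_injective : Function.Injective rot := by
  intro b c h
  obtain ⟨h₁, h₂⟩ := Prod.mk.inj h
  exact Prod.ext (DihedralGroup.r.inj h₁) h₂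

lemma s_mul_s : s * s = 1 := by decide

lemma s_mul_rot (b : A) : s * rot b = rot b⁻¹ * s := by
  revert b; decide

lemma s_notMem (b : A) : rot b ≠ s := by
  revert b; decide

lemma cases_rot (x : G) : (∃ b, x = rot b) ∨ ∃ b, x = rot b * s := by
  revert x; decide

/-- A characterization of the copy of `C4 × C2` that is visibly invariant under automorphisms. -/
lemma mem_rot_iff (x : G) :
    (∃ b, rot b = x) ↔ x * x ≠ 1 ∨ ∃ y z : G, y * y ≠ 1 ∧ z * z ≠ 1 ∧ y * z = x := by
  revert x; decide

lemma mem_rot_map (φ : MulAut G) {x : G} (h : ∃ b, rot b = x) : ∃ b, rot b = φ x := by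
  rw [mem_rot_iff] at h ⊢
  have hφ {y : G} (hy : y * y ≠ 1) : φ y * φ y ≠ 1 := by
    rwa [← map_mul, Ne, map_eq_one_iff φ φ.injective]
  obtain hx | ⟨y, z, hy, hz, rfl⟩ := h
  · exact Or.inl (hφ hx)
  · exact Or.inr ⟨φ y, φ z, hφ hy, hφ hz, (map_mul φ y z).symm⟩

/-- The action of `(a, α)` in the holomorph on `D4 × C2`: `b ↦ α b` and `b * s ↦ a * α b * s`.
The sign in the second clause comes from `r (-i) * sr 0 = sr i`. -/
def act (h : Hol A) : G → G
  | (DihedralGroup.r i, j) => rot (h.right (Multiplicative.ofAdd (i, j.toAdd)))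
  | (DihedralGroup.sr i, j) =>
      rot (h.left * h.right (Multiplicative.ofAdd (-i, j.toAdd))) * s

lemma act_rot (h : Hol A) (b : A) : act h (rot b) = rot (h.right b) := rfl

lemma act_rot_mul_s (h : Hol A) (b : A) :
    act h (rot b * s) = rot (h.left * h.right b) * s := by
  have hb : rot b * s = (DihedralGroup.sr (-b.toAdd.1), Multiplicative.ofAdd b.toAdd.2) := by
    revert b; decide
  rw [hb]
  simp only [act, neg_neg]
  rfl

lemma act_mul (h : Hol A) (x y : G) : act h (x * y) = act h x * act h y := by
  -- Moving `s` past an element of the abelian subgroup `A` inverts that element.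
  have key (b c : A) : rot b * s * rot c = rot (b * c⁻¹) * s := by
    rw [mul_assoc, s_mul_rot, ← mul_assoc, map_mul]
  have key' (b c : A) : rot b * s * (rot c * s) = rot (b * c⁻¹) := by
    rw [← mul_assoc, key, mul_assoc, s_mul_s, mul_one]
  obtain ⟨b, rfl⟩ | ⟨b, rfl⟩ := cases_rot x <;> obtain ⟨c, rfl⟩ | ⟨c, rfl⟩ := cases_rot y
  · rw [← map_mul, act_rot, act_rot, act_rot, map_mul, map_mul]
  · rw [← mul_assoc, ← map_mul]
    simp only [act_rot, act_rot_mul_s]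
    rw [← mul_assoc, ← map_mul, map_mul h.right, mul_left_comm]
  · rw [key]
    simp only [act_rot, act_rot_mul_s]
    rw [key, map_mul h.right, map_inv, mul_assoc]
  · rw [key']
    simp only [act_rot, act_rot_mul_s]
    rw [key', map_mul h.right, map_inv, ← div_eq_mul_inv, ← div_eq_mul_inv,
      mul_div_mul_left_eq_div]

lemma act_one (x : G) : act 1 x = x := by
  obtain ⟨b, rfl⟩ | ⟨b, rfl⟩ := cases_rot x
  · simp [act_rot]
  · simp [act_rot_mul_s]

lemma act_act (h k : Hol A) (x : G) : act (h * k) x = act h (act k x) := by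
  obtain ⟨b, rfl⟩ | ⟨b, rfl⟩ := cases_rot x
  · simp [act_rot]
  · rw [act_rot_mul_s, act_rot_mul_s, act_rot_mul_s, map_mul h.right, ← mul_assoc]
    rfl

/-- The action of the holomorph of `C4 × C2` on `D4 × C2` by automorphisms. -/
def holToAut : Hol A →* MulAut G where
  toFun h :=
    { toFun := act h
      invFun := act h⁻¹
      left_inv := fun x => by rw [← act_act, inv_mul_cancel, act_one]
      right_inv := fun x => by rw [← act_act, mul_inv_cancel, act_one]
      map_mul' := act_mul h }
  map_one' := MulEquiv.ext act_one
  map_mul' h k := MulEquiv.ext (act_act h k)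

lemma holToAut_apply (h : Hol A) (x : G) : holToAut h x = act h x := rfl

lemma holToAut_injective : Function.Injective holToAut := by
  intro h k hk
  have hx (x : G) : act h x = act k x := by
    rw [← holToAut_apply, hk, holToAut_apply]
  refine SemidirectProduct.ext ?_ (MulEquiv.ext fun b => ?_)
  · have h1 := hx (rot 1 * s)
    rw [act_rot_mul_s, act_rot_mul_s, map_one, map_one, mul_one, mul_one] at h1
    exact rot_injective (mul_right_cancel h1)
  · exact rot_injective (hx (rot b))

lemma holToAut_surjective : Function.Surjective holToAut := by
  intro φ
  choose f hf using fun b : A => mem_rot_map φ ⟨b, rfl⟩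
  let α₀ : A →* A := MonoidHom.mk' f fun b c => rot_injective (by simp [hf])
  have hα₀ : Function.Injective α₀ := fun b c hbc =>
    rot_injective (φ.injective (by rw [← hf, ← hf]; exact congrArg rot hbc))
  let α : MulAut A := MulEquiv.ofBijective α₀ (Finite.injective_iff_bijective.mp hα₀)
  have hα (b : A) : rot (α b) = φ (rot b) := hf b
  obtain ⟨a, ha⟩ : ∃ a, φ s = rot a * s := by
    refine (cases_rot (φ s)).resolve_left ?_
    rintro ⟨b, hb⟩
    obtain ⟨c, hc⟩ := mem_rot_map φ⁻¹ ⟨b, hb.symm⟩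
    rw [MulAut.inv_apply_self] at hc
    exact s_notMem c hc
  refine ⟨⟨a, α⟩, MulEquiv.ext fun x => ?_⟩
  rw [holToAut_apply]
  obtain ⟨b, rfl⟩ | ⟨b, rfl⟩ := cases_rot x
  · rw [act_rot, hα]
  · rw [act_rot_mul_s, map_mul φ, ha, ← hα, ← mul_assoc, ← map_mul, mul_comm a]

end AutD4C2

/-- The automorphism group of `D4 × C2` is isomorphic to the holomorph `Hol(C4 × C2)`. -/
theorem aut_D4_prod_C2_iso_hol :
    Nonempty (MulAut (DihedralGroup 4 × Multiplicative (ZMod 2)) ≃*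
      Hol (Multiplicative (ZMod 4 × ZMod 2))) := by
  exact ⟨(MulEquiv.ofBijective AutD4C2.holToAut
    ⟨AutD4C2.holToAut_injective, AutD4C2.holToAut_surjective⟩).symm⟩
end

section
/- The automorphism group of Q2 × C2, where Q2 is the quaternion group of order 8, has order 192. -/
/-!
An automorphism of `G = Q₈ × C₂` is determined by the images `(u, v, w)` of the generators
`i = a 1`, `j = xa 0` of `Q₈` and of the generator of `C₂`. A triple `(u, v, w)` arises in this way
exactly when it satisfies the defining relations of `G`, so that it induces an endomorphism
(`word_mul`), and `u ^ 2`, `w`, `w * u ^ 2` are nontrivial. The second condition says that the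
endomorphism is injective on the centre of `G`; since every non-central element of `G` squares to
`i ^ 2`, the endomorphism is then injective (`word_eq_one`), hence bijective as `G` is finite.

This identifies `Aut G` with the set of such triples (`autEquiv`). There are 192 of them: `u` is one
of the 12 elements of order 4, `v` one of the 8 elements not commuting with `u`, and `w` one of the
2 central involutions other than `u ^ 2`.
-/

namespace QuaternionProdAut

open QuaternionGroup

/-- The group `Q₈ × C₂`. -/
abbrev G : Type := QuaternionGroup 2 × Multiplicative (ZMod 2)

/-- The generator `i` of the quaternion factor. -/
def genI : G := (a 1, 1)

/-- The generator `j` of the quaternion factor. -/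
def genJ : G := (xa 0, 1)

/-- The generator of the cyclic factor. -/
def genC : G := (1, Multiplicative.ofAdd 1)

/-- The triples that are images of `(genI, genJ, genC)` under an automorphism: they satisfy the
defining relations of `Q₈ × C₂`, and `u ^ 2`, `w`, `w * u ^ 2` are nontrivial. The last condition is
written `w ≠ u * u`, which is the same because `u ^ 4 = 1`. -/
def IsGenTriple (p : G × G × G) : Prop :=
  p.1 * p.1 ≠ 1 ∧ p.1 * p.1 * (p.1 * p.1) = 1 ∧ p.2.1 * p.2.1 = p.1 * p.1 ∧
    p.1 * p.2.1 * p.1 = p.2.1 ∧ p.2.2 ≠ 1 ∧ p.2.2 ≠ p.1 * p.1 ∧ p.2.2 * p.2.2 = 1 ∧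
    p.1 * p.2.2 = p.2.2 * p.1 ∧ p.2.1 * p.2.2 = p.2.2 * p.2.1

instance : DecidablePred IsGenTriple := fun p => by
  unfold IsGenTriple
  infer_instance

/-- The normal form of `g` in the generators `genI`, `genJ`, `genC`, evaluated at a triple. -/
def word (p : G × G × G) : G → G
  | (a i, t) => p.1 ^ i.val * p.2.2 ^ t.toAdd.val
  | (xa i, t) => p.2.1 * p.1 ^ i.val * p.2.2 ^ t.toAdd.val

theorem word_gen : ∀ g : G, word (genI, genJ, genC) g = g := by decide +kernel

theorem isGenTriple_gen : IsGenTriple (genI, genJ, genC) := by decide +kernel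

theorem map_word (φ : MulAut G) (p : G × G × G) (g : G) :
    φ (word p g) = word (φ p.1, φ p.2.1, φ p.2.2) g := by
  rcases g with ⟨i | i, t⟩ <;> simp only [word, map_mul, map_pow]

theorem word_apply_gen : ∀ p : G × G × G,
    word p genI = p.1 ∧ word p genJ = p.2.1 ∧ word p genC = p.2.2 := by
  rintro ⟨u, v, w⟩
  refine ⟨?_, ?_, ?_⟩
  · change u ^ 1 * w ^ 0 = u
    simp
  · change v * u ^ 0 * w ^ 0 = v
    simp
  · change u ^ 0 * w ^ 1 = w
    simp

theorem word_mul (p : G × G × G) (hp : IsGenTriple p) (g h : G) :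
    word p (g * h) = word p g * word p h := by
  obtain ⟨u, v, w⟩ := p
  obtain ⟨-, hu, hvu, huv, -, -, hw, huw, hvw⟩ := hp
  dsimp only at hu hvu huv hw huw hvw
  have hu4 : u ^ 4 = 1 := by rw [← hu, ← sq, ← sq, ← pow_mul]
  have hw2 : w ^ 2 = 1 := by rw [sq, hw]
  have hA : ∀ i j : ZMod 4, u ^ (i + j).val = u ^ i.val * u ^ j.val := fun i j => by
    rw [ZMod.val_add, ← pow_add, ← pow_eq_pow_mod _ hu4]
  have hW : ∀ s t : ZMod 2, w ^ (s + t).val = w ^ s.val * w ^ t.val := fun s t => by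
    rw [ZMod.val_add, ← pow_add, ← pow_eq_pow_mod _ hw2]
  have huW : ∀ (t : ZMod 2) (i : ZMod 4), w ^ t.val * u ^ i.val = u ^ i.val * w ^ t.val :=
    fun t i => ((show Commute u w from huw).pow_pow _ _).eq.symm
  have hvW : ∀ t : ZMod 2, w ^ t.val * v = v * w ^ t.val :=
    fun t => ((show Commute v w from hvw).pow_right _).eq.symm
  -- The relation `u * v * u = v` says that conjugation by `v` inverts `u`.
  have hAv : ∀ i : ZMod 4, u ^ i.val * v = v * u ^ (-i).val := fun i => by
    have hk : u ^ i.val * v = v * u⁻¹ ^ i.val :=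
      (show SemiconjBy v u⁻¹ u from mul_inv_eq_of_eq_mul huv.symm).pow_right i.val |>.eq.symm
    have h1 : u ^ i.val * u ^ (-i).val = 1 := by rw [← hA]; simp
    rw [hk, inv_pow, eq_inv_of_mul_eq_one_right h1]
  have hvv : v * v = u ^ (2 : ZMod 4).val := by rw [hvu, ← sq]; rfl
  have aa (i j : ZMod 4) (s t : ZMod 2) : u ^ (i + j).val * w ^ (s + t).val =
      u ^ i.val * w ^ s.val * (u ^ j.val * w ^ t.val) := by
    rw [hA, hW]
    simp only [mul_assoc]
    rw [← mul_assoc (w ^ _), huW, mul_assoc]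
  have axa (i j : ZMod 4) (s t : ZMod 2) : v * u ^ (j - i).val * w ^ (s + t).val =
      u ^ i.val * w ^ s.val * (v * u ^ j.val * w ^ t.val) := by
    rw [sub_eq_neg_add, mul_assoc v, aa, ← mul_assoc v, ← mul_assoc v, ← hAv]
    simp only [mul_assoc]
    rw [← mul_assoc v, ← hvW, mul_assoc]
  have xaa (i j : ZMod 4) (s t : ZMod 2) : v * u ^ (i + j).val * w ^ (s + t).val =
      v * u ^ i.val * w ^ s.val * (u ^ j.val * w ^ t.val) := by
    rw [mul_assoc v, aa]
    simp only [mul_assoc]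
  have xaxa (i j : ZMod 4) (s t : ZMod 2) : u ^ (2 + j - i).val * w ^ (s + t).val =
      v * u ^ i.val * w ^ s.val * (v * u ^ j.val * w ^ t.val) := by
    rw [add_sub_assoc, hA, ← hvv, mul_assoc, mul_assoc v v, ← mul_assoc v (u ^ _), axa]
    simp only [mul_assoc]
  rcases g with ⟨i | i, s⟩ <;> rcases h with ⟨j | j, t⟩
  · exact aa i j s t
  · exact axa i j s t
  · exact xaa i j s t
  · exact xaxa i j s t

/-- Every element of `Q₈ × C₂` is central, hence a product of powers of `genI ^ 2` and `genC`, or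
squares to `genI ^ 2`. -/
theorem central_or_sq : ∀ g : G, g = 1 ∨ g = genC ∨ g = genI * genI ∨ g = genC * (genI * genI) ∨
    g * g = genI * genI := by decide +kernel

theorem word_eq_one (p : G × G × G) (hp : IsGenTriple p) (g : G) (hg : word p g = 1) : g = 1 := by
  obtain ⟨hI, -, hC⟩ := word_apply_gen p
  have hII : word p (genI * genI) = p.1 * p.1 := by rw [word_mul p hp, hI]
  obtain ⟨hu, hu4, -, -, hw, hwu, -⟩ := id hp
  rcases central_or_sq g with h | h | h | h | h
  · exact h
  · rw [h, hC] at hg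
    exact absurd hg hw
  · rw [h, hII] at hg
    exact absurd hg hu
  · rw [h, word_mul p hp, hII, hC] at hg
    exact absurd (mul_right_cancel (hg.trans hu4.symm)) hwu
  · have h2 := word_mul p hp g g
    rw [h, hII, hg, one_mul] at h2
    exact absurd h2 hu

/-- The endomorphism sending the generators to the members of `p`. -/
def wordHom (p : G × G × G) (hp : IsGenTriple p) : G →* G :=
  MonoidHom.mk' (word p) (word_mul p hp)

theorem wordHom_bijective (p : G × G × G) (hp : IsGenTriple p) :
    Function.Bijective (wordHom p hp) :=
  Finite.injective_iff_bijective.mp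
    ((injective_iff_map_eq_one (wordHom p hp)).mpr (word_eq_one p hp))

theorem isGenTriple_map (φ : MulAut G) : IsGenTriple (φ genI, φ genJ, φ genC) := by
  have h := isGenTriple_gen
  simp only [IsGenTriple] at h ⊢
  simpa only [← map_mul, ne_eq, EmbeddingLike.map_eq_one_iff, EmbeddingLike.apply_eq_iff_eq] using h

/-- Automorphisms correspond to the admissible images of the generators. -/
noncomputable def autEquiv : MulAut G ≃ {p : G × G × G // IsGenTriple p} where
  toFun φ := ⟨(φ genI, φ genJ, φ genC), isGenTriple_map φ⟩
  invFun p := MulEquiv.ofBijective (wordHom p.1 p.2) (wordHom_bijective p.1 p.2)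
  left_inv φ := by
    ext1 g
    change word (φ genI, φ genJ, φ genC) g = φ g
    rw [← map_word φ (genI, genJ, genC) g, word_gen]
  right_inv p := by
    obtain ⟨hI, hJ, hC⟩ := word_apply_gen p.1
    exact Subtype.ext (Prod.ext hI (Prod.ext hJ hC))

theorem card_isGenTriple : Fintype.card {p : G × G × G // IsGenTriple p} = 192 := by
  -- The count is an iterated sum over `u`, `v`, `w`, in which each condition is moved outside the
  -- inner sums whose variables it does not involve, so that few triples are left to evaluate.
  rw [Fintype.card_subtype, Finset.card_filter]
  simp only [Fintype.sum_prod_type (α₁ := G), IsGenTriple, ite_and, Finset.sum_ite_irrel,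
    Finset.sum_const_zero]
  decide +kernel

end QuaternionProdAut

/-- The automorphism group of `Q2 × C2`, where `Q2` is the quaternion group of order 8,
has order 192. -/
theorem card_aut_Q2_prod_C2 :
    Nat.card (MulAut (QuaternionGroup 2 × Multiplicative (ZMod 2))) = 192 := by
  rw [Nat.card_congr QuaternionProdAut.autEquiv, Nat.card_eq_fintype_card,
    QuaternionProdAut.card_isGenTriple]
end

section
/- Let p be an odd prime and n ≥ 2 a natural number such that p ≡ 1 (mod 2^n) but p ≢ 1 (mod 2^{n+1}). Then every Sylow 2-subgroup of the general linear group GL(2, ZMod p) is isomorphic to the wreath product C_{2^n} wr C2. -/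
/-- The coordinate-swap automorphism of `G × G`. -/
def swapAut (G : Type*) [Group G] : MulAut (G × G) :=
  (MulEquiv.prodComm : G × G ≃* G × G)

lemma swapAut_sq (G : Type*) [Group G] : swapAut G ^ 2 = 1 := by
  rw [sq]
  exact MulEquiv.ext fun x => Prod.swap_swap x

/-- The wreath product `G wr C2`: the semidirect product `(G × G) ⋊ C2` where the
nontrivial element of `C2` swaps the two factors. -/
abbrev wreathC2 (G : Type*) [Group G] : Type _ :=
  SemidirectProduct (G × G) (Multiplicative (ZMod 2)) (zmodHom 2 (swapAut G) (swapAut_sq G))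

/-! ### The monomial representation of the wreath product -/

/-- The embedding of the diagonal torus `(x, y) ↦ diag(x, y)` in `GL(2, R)`. -/
def diagHom (R : Type*) [CommRing R] : Rˣ × Rˣ →* Matrix.GeneralLinearGroup (Fin 2) R where
  toFun x :=
    { val := !![(x.1 : R), 0; 0, (x.2 : R)]
      inv := !![((x.1⁻¹ : Rˣ) : R), 0; 0, ((x.2⁻¹ : Rˣ) : R)]
      val_inv := by simp [Matrix.one_fin_two]
      inv_val := by simp [Matrix.one_fin_two] }
  map_one' := by ext : 1; simp [Matrix.one_fin_two]
  map_mul' x y := by ext : 1; simp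

/-- The matrix exchanging the two coordinates, as an element of `GL(2, R)`. -/
def swapGL (R : Type*) [CommRing R] : Matrix.GeneralLinearGroup (Fin 2) R where
  val := !![0, 1; 1, 0]
  inv := !![0, 1; 1, 0]
  val_inv := by simp [Matrix.one_fin_two]
  inv_val := by simp [Matrix.one_fin_two]

lemma swapGL_sq (R : Type*) [CommRing R] : swapGL R ^ 2 = 1 := by
  ext : 1
  simp [swapGL, sq, Matrix.one_fin_two]

/-- The representation of `G wr C2` by monomial `2 × 2` matrices attached to a linear character
`χ` of `G`. -/
def monomialHom {G R : Type*} [Group G] [CommRing R] (χ : G →* Rˣ) :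
    wreathC2 G →* Matrix.GeneralLinearGroup (Fin 2) R :=
  SemidirectProduct.lift ((diagHom R).comp (χ.prodMap χ)) (zmodHom 2 (swapGL R) (swapGL_sq R)) (by
    intro c
    ext x : 1
    simp only [MonoidHom.comp_apply, MulEquiv.coe_toMonoidHom, MulAut.conj_apply,
      eq_mul_inv_iff_mul_eq]
    obtain rfl | rfl : c = Multiplicative.ofAdd 0 ∨ c = Multiplicative.ofAdd 1 := by
      revert c; decide
    · simp [zmodHom]
    · ext : 1
      simp [zmodHom, ZMod.val_one, swapAut, diagHom, swapGL])

lemma monomialHom_apply {G R : Type*} [Group G] [CommRing R] (χ : G →* Rˣ) (x y : G)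
    (c : Multiplicative (ZMod 2)) :
    monomialHom χ ⟨(x, y), c⟩ =
      diagHom R (χ x, χ y) * swapGL R ^ (Multiplicative.toAdd c).val := rfl

lemma monomialHom_injective {G R : Type*} [Group G] [CommRing R] [Nontrivial R] (χ : G →* Rˣ)
    (hχ : Function.Injective χ) : Function.Injective (monomialHom χ) := by
  rw [injective_iff_map_eq_one]
  rintro ⟨⟨x, y⟩, c⟩ h
  have h' := congrArg Units.val h
  rw [monomialHom_apply] at h'
  obtain rfl | rfl : c = Multiplicative.ofAdd 0 ∨ c = Multiplicative.ofAdd 1 := by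
    clear h h'; revert c; decide
  · simp [diagHom, Matrix.one_fin_two] at h'
    rw [(injective_iff_map_eq_one χ).1 hχ x h'.1, (injective_iff_map_eq_one χ).1 hχ y h'.2]
    rfl
  -- the matrix is antidiagonal, so it is not the identity
  · simp [diagHom, swapGL, ZMod.val_one, Matrix.one_fin_two] at h'

lemma zmodHom_injective {M : Type*} [Monoid M] {n : ℕ} [NeZero n] {σ : M} (h : orderOf σ = n) :
    Function.Injective (zmodHom n σ (h ▸ pow_orderOf_eq_one σ)) := by
  intro a b hab
  apply Multiplicative.toAdd.injective
  apply ZMod.val_injective n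
  exact pow_injOn_Iio_orderOf (by simpa [h] using ZMod.val_lt _) (by simpa [h] using ZMod.val_lt _)
    hab

/-! ### The power of two in the order of `GL(2, p)` -/

lemma factorization_card_GL2 {p n m : ℕ} [Fact p.Prime] (hn : 2 ≤ n) (hm : Odd m)
    (hpm : p = 2 ^ n * m + 1) :
    (Nat.card (Matrix.GeneralLinearGroup (Fin 2) (ZMod p))).factorization 2 = 2 * n + 1 := by
  obtain ⟨k, rfl⟩ : ∃ k, n = k + 2 := ⟨n - 2, by omega⟩
  have hcard : Nat.card (Matrix.GeneralLinearGroup (Fin 2) (ZMod p)) =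
      2 ^ (2 * (k + 2) + 1) * (m ^ 2 * (2 * (2 ^ k * m) + 1) * p) := by
    rw [Matrix.card_GL_field, Fin.prod_univ_two, ZMod.card]
    have e1 : p ^ 2 - p ^ ((0 : Fin 2) : ℕ) = 2 ^ (k + 2) * m * (p + 1) := by
      apply Nat.sub_eq_of_eq_add
      simp only [Fin.val_zero, pow_zero, hpm]
      ring
    have e2 : p ^ 2 - p ^ ((1 : Fin 2) : ℕ) = 2 ^ (k + 2) * m * p := by
      apply Nat.sub_eq_of_eq_add
      simp only [Fin.val_one, pow_one, hpm]
      ring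
    rw [e1, e2, show p + 1 = 2 * (2 * (2 ^ k * m) + 1) by rw [hpm]; ring]
    ring
  have hp : Odd p := ⟨2 ^ (k + 1) * m, by rw [hpm]; ring⟩
  have hodd : Odd (m ^ 2 * (2 * (2 ^ k * m) + 1) * p) :=
    ((hm.pow).mul ⟨_, rfl⟩).mul hp
  rw [hcard, Nat.factorization_mul (by positivity) hodd.pos.ne', Finsupp.add_apply,
    Nat.prime_two.factorization_pow, Finsupp.single_eq_same,
    Nat.factorization_eq_zero_of_not_dvd hodd.not_two_dvd_nat, add_zero]

/-- If `p` is an odd prime with `p ≡ 1 (mod 2^n)` but `p ≢ 1 (mod 2^(n+1))` (`n ≥ 2`), then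
every Sylow 2-subgroup of `GL(2, ZMod p)` is isomorphic to the wreath product
`C_{2^n} wr C2`. -/
theorem sylow_two_GL2_iso_wreath (p n : ℕ) (hp : p.Prime) (hodd : Odd p) (hn : 2 ≤ n)
    (h1 : p ≡ 1 [MOD 2 ^ n]) (h2 : ¬ p ≡ 1 [MOD 2 ^ (n + 1)])
    (P : Sylow 2 (Matrix.GeneralLinearGroup (Fin 2) (ZMod p))) :
    Nonempty (P ≃* wreathC2 (Multiplicative (ZMod (2 ^ n)))) := by
  have := Fact.mk hp
  obtain ⟨m, hm⟩ := (Nat.modEq_iff_dvd' hp.one_le).1 h1.symm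
  have hpm : p = 2 ^ n * m + 1 := by have := hp.one_le; omega
  have hmodd : Odd m := by
    by_contra hme
    obtain ⟨r, rfl⟩ := even_iff_two_dvd.1 (Nat.not_odd_iff_even.1 hme)
    exact h2 ((Nat.modEq_iff_dvd' hp.one_le).2 ⟨r, by rw [hm]; ring⟩).symm
  -- a generator `g` of the cyclic group of units, raised to the power `m = (p - 1) / 2 ^ n`
  obtain ⟨g, hg⟩ := isCyclic_iff_exists_orderOf_eq_natCard.1
    (inferInstance : IsCyclic (ZMod p)ˣ)
  have hg' : orderOf (g ^ m) = 2 ^ n := by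
    have hord : orderOf g = 2 ^ n * m := by
      rw [hg, Nat.card_eq_fintype_card, ZMod.card_units, hm]
    rw [orderOf_pow_of_dvd hmodd.pos.ne' (hord ▸ dvd_mul_left _ _), hord,
      Nat.mul_div_cancel _ hmodd.pos]
  have hinj := monomialHom_injective _ (zmodHom_injective hg')
  have hcard : Nat.card (monomialHom (zmodHom (2 ^ n) (g ^ m)
      (hg' ▸ pow_orderOf_eq_one (g ^ m)))).range =
      2 ^ (Nat.card (Matrix.GeneralLinearGroup (Fin 2) (ZMod p))).factorization 2 := by
    rw [factorization_card_GL2 hn hmodd hpm,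
      ← Nat.card_congr (MonoidHom.ofInjective hinj).toEquiv, SemidirectProduct.card,
      Nat.card_prod]
    simp only [Nat.card_congr Multiplicative.toAdd, Nat.card_zmod]
    ring
  exact ⟨(P.equiv (Sylow.ofCard _ hcard)).trans (MonoidHom.ofInjective hinj).symm⟩
end

section
/- Let p be an odd prime and let x, y be elements of ZMod p satisfying x^2 + y^2 = -1. Then the matrices A = [[x, y], [y, -x]] and B = [[0, 1], [-1, 0]] are invertible, and the subgroup of GL(2, ZMod p) that they generate is isomorphic to the quaternion group Q2 of order 8. -/
/-!
Both matrices square to `-1` (for `A` this is the equation `x² + y² = -1`) and they anticommute, so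
`A ^ 4 = 1`, `B ^ 2 = A ^ 2` and `A * B = B * A⁻¹`: the defining relations of the quaternion group
hold, which gives a surjection from `QuaternionGroup 2` onto the subgroup generated by `A` and `B`.
Every nontrivial element of `QuaternionGroup 2` is the central involution `a 2` or squares to it,
so a homomorphism is injective as soon as it does not kill `a 2`. Here `a 2` maps to
`A ^ 2 = -1`, which differs from `1` because `p` is odd.
-/

namespace QuaternionGL2

open QuaternionGroup

/-- The homomorphism from `QuaternionGroup 2` sending `a 1` to `u` and `xa 0` to `v`, for `u`, `v`
satisfying the relations of the standard presentation. -/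
def lift {G : Type*} [Group G] (u v : G) (hu : u ^ 4 = 1) (hv : v ^ 2 = u ^ 2)
    (huv : u * v = v * u⁻¹) : QuaternionGroup 2 →* G :=
  -- `i ↦ u ^ i` on `ZMod 4` turns sums into products since `u ^ 4 = 1`.
  have hadd : ∀ i j : ZMod 4, u ^ (i + j).val = u ^ i.val * u ^ j.val := fun i j => by
    rw [ZMod.val_add, ← pow_add, ← pow_mod_orderOf u (i.val + j.val),
      ← pow_mod_orderOf u ((i.val + j.val) % 4),
      Nat.mod_mod_of_dvd _ (orderOf_dvd_of_pow_eq_one hu)]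
  have hsub : ∀ i j : ZMod 4, u ^ (j - i).val = (u ^ i.val)⁻¹ * u ^ j.val := fun i j => by
    rw [eq_inv_mul_iff_mul_eq, ← hadd, add_sub_cancel]
  have hcomm : ∀ n : ℕ, u ^ n * v = v * (u ^ n)⁻¹ := fun n => by
    have h : SemiconjBy v u⁻¹ u := huv.symm
    simpa using (h.pow_right n).eq.symm
  { toFun := fun g => match g with
      | .a i => u ^ (show ZMod 4 from i).val
      | .xa i => v * u ^ (show ZMod 4 from i).val
    map_one' := by
      change u ^ (0 : ZMod 4).val = 1
      simp
    map_mul' := by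
      rintro (i | i) (j | j)
      · exact hadd i j
      · change v * u ^ (ZMod.val (n := 4) (j - i)) =
          u ^ (ZMod.val (n := 4) i) * (v * u ^ (ZMod.val (n := 4) j))
        rw [← mul_assoc, hcomm, mul_assoc, ← hsub]
      · change v * u ^ (ZMod.val (n := 4) (i + j)) =
          v * u ^ (ZMod.val (n := 4) i) * u ^ (ZMod.val (n := 4) j)
        rw [mul_assoc, ← hadd]
      · change u ^ (ZMod.val (n := 4) ((2 : ZMod 4) + j - i)) =
          v * u ^ (ZMod.val (n := 4) i) * (v * u ^ (ZMod.val (n := 4) j))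
        have h2 : u ^ (ZMod.val (2 : ZMod 4)) = v * v := by
          rw [← sq, hv]
          rfl
        rw [mul_assoc, ← mul_assoc (u ^ _) v, hcomm, mul_assoc, ← mul_assoc v v,
          ← hsub, ← h2, ← hadd, add_sub_assoc] }

/-- Elements satisfying the quaternion relations with `u ^ 2 ≠ 1` generate a copy of
`QuaternionGroup 2`. -/
theorem closure_equiv {G : Type*} [Group G] (u v : G) (hu : u ^ 4 = 1) (hv : v ^ 2 = u ^ 2)
    (huv : u * v = v * u⁻¹) (hne : u ^ 2 ≠ 1) :
    Nonempty (Subgroup.closure {u, v} ≃* QuaternionGroup 2) := by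
  have ha2 : lift u v hu hv huv (a 2) = u ^ 2 := rfl
  have ha1 : lift u v hu hv huv (a 1) = u := pow_one u
  have hx0 : lift u v hu hv huv (xa 0) = v := by
    change v * u ^ (0 : ZMod 4).val = v
    simp
  have hdec : ∀ g : QuaternionGroup 2, g = 1 ∨ g = a 2 ∨ g ^ 2 = a 2 := by decide
  have hinj : Function.Injective (lift u v hu hv huv) := by
    rw [injective_iff_map_eq_one]
    intro g hg
    rcases hdec g with h | h | h
    · exact h
    · exact absurd (by rw [← ha2, ← h, hg]) hne
    · exact absurd (by rw [← ha2, ← h, map_pow, hg, one_pow]) hne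
  have hrange : Subgroup.closure {u, v} = (lift u v hu hv huv).range := by
    apply le_antisymm
    · rw [Subgroup.closure_le]
      rintro g (rfl | rfl)
      · exact ⟨a 1, ha1⟩
      · exact ⟨xa 0, hx0⟩
    · have hmu : u ∈ Subgroup.closure {u, v} := Subgroup.subset_closure (by simp)
      have hmv : v ∈ Subgroup.closure {u, v} := Subgroup.subset_closure (by simp)
      rintro _ ⟨i | i, rfl⟩
      · exact pow_mem hmu _
      · exact mul_mem hmv (pow_mem hmu _)
  rw [hrange]
  exact ⟨(MonoidHom.ofInjective hinj).symm⟩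

end QuaternionGL2

/-- For an odd prime `p` and `x, y : ZMod p` with `x² + y² = -1`, the matrices
`A = [[x, y], [y, -x]]` and `B = [[0, 1], [-1, 0]]` are invertible, and the subgroup of
`GL(2, ZMod p)` they generate is isomorphic to the quaternion group of order 8. -/
theorem quaternion_subgroup_of_GL2 (p : ℕ) (hp : p.Prime) (hodd : Odd p)
    (x y : ZMod p) (hxy : x ^ 2 + y ^ 2 = -1) :
    ∃ (hA : IsUnit (!![x, y; y, -x] : Matrix (Fin 2) (Fin 2) (ZMod p)))
      (hB : IsUnit (!![0, 1; -1, 0] : Matrix (Fin 2) (Fin 2) (ZMod p))),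
      Nonempty ((Subgroup.closure {hA.unit, hB.unit} :
        Subgroup (Matrix (Fin 2) (Fin 2) (ZMod p))ˣ) ≃* QuaternionGroup 2) := by
  have hA : IsUnit (!![x, y; y, -x] : Matrix (Fin 2) (Fin 2) (ZMod p)) := by
    rw [Matrix.isUnit_iff_isUnit_det, Matrix.det_fin_two_of,
      show x * -x - y * y = 1 by linear_combination -hxy]
    exact isUnit_one
  have hB : IsUnit (!![0, 1; -1, 0] : Matrix (Fin 2) (Fin 2) (ZMod p)) := by
    rw [Matrix.isUnit_iff_isUnit_det, Matrix.det_fin_two_of]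
    simp
  have hA2 : hA.unit ^ 2 = -1 := by
    ext i j
    fin_cases i <;> fin_cases j <;> simp [sq, Matrix.mul_apply, Fin.sum_univ_two]
    · linear_combination hxy
    · ring
    · ring
    · linear_combination hxy
  have hB2 : hB.unit ^ 2 = -1 := by
    ext i j
    fin_cases i <;> fin_cases j <;> simp [sq, Matrix.mul_apply, Fin.sum_univ_two]
  have hinv : hA.unit⁻¹ = -hA.unit := by
    rw [inv_eq_iff_mul_eq_one, mul_neg, ← sq, hA2, neg_neg]
  refine ⟨hA, hB, QuaternionGL2.closure_equiv _ _ ?_ (hB2.trans hA2.symm) ?_ ?_⟩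
  · rw [show 4 = 2 * 2 from rfl, pow_mul, hA2, neg_one_sq]
  · rw [hinv]
    ext i j
    fin_cases i <;> fin_cases j <;> simp [Matrix.mul_apply, Fin.sum_univ_two]
  · rw [hA2]
    intro h
    have : Fact p.Prime := ⟨hp⟩
    have : Fact (2 < p) := ⟨by
      have := hp.two_le
      rcases hodd with ⟨k, rfl⟩
      omega⟩
    have h00 := congrArg (fun M : (Matrix (Fin 2) (Fin 2) (ZMod p))ˣ => M.val 0 0) h
    exact ZMod.neg_one_ne_one (by simpa using h00)
end

section
/- Let p be an odd prime and let G = C_p ⋊ C16 be the semidirect product of the cyclic group of order p by the cyclic group of order 16 in which a chosen generator of C16 acts on C_p by inversion x ↦ -x. Then the automorphism group of G is isomorphic to Hol(C_p) × C4 × C2. -/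
lemma inv_pow_sixteen (G : Type*) [CommGroup G] : MulEquiv.inv G ^ 16 = 1 := by
  have h2 : MulEquiv.inv G ^ 2 = 1 := by
    rw [sq]; exact MulEquiv.ext fun x => inv_inv x
  calc MulEquiv.inv G ^ 16 = (MulEquiv.inv G ^ 2) ^ 8 := by rw [← pow_mul]
  _ = 1 := by rw [h2, one_pow]

/-- The group `C_p ⋊ C16` in which the chosen generator of `C16` acts on `C_p` by
inversion `x ↦ -x` (multiplicatively, `x ↦ x⁻¹`). -/
abbrev CpRtimesC16 (p : ℕ) : Type :=
  SemidirectProduct (Multiplicative (ZMod p)) (Multiplicative (ZMod 16))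
    (zmodHom 16 (MulEquiv.inv (Multiplicative (ZMod p))) (inv_pow_sixteen _))

/-- The parity of a class modulo 16, as a natural number `0` or `1`. -/
def parity (c : Multiplicative (ZMod 16)) : ℕ := c.toAdd.val % 2

lemma parity_mul (c d : Multiplicative (ZMod 16)) :
    parity (c * d) = (parity c + parity d) % 2 := by
  revert c d; decide

lemma parity_eq (c : Multiplicative (ZMod 16)) : parity c = 0 ∨ parity c = 1 :=
  Nat.mod_two_eq_zero_or_one _

lemma parity_smul (k : (ZMod 16)ˣ) (c : Multiplicative (ZMod 16)) :
    parity (Multiplicative.ofAdd ((k : ZMod 16) * c.toAdd)) = parity c := by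
  revert k c; decide

lemma act_apply {A : Type*} [CommGroup A] (c : Multiplicative (ZMod 16)) (y : A) :
    zmodHom 16 (MulEquiv.inv A) (inv_pow_sixteen A) c y =
      if parity c = 0 then y else y⁻¹ := by
  have h2 : MulEquiv.inv A ^ 2 = 1 := by
    rw [sq]; exact MulEquiv.ext fun x => inv_inv x
  have : zmodHom 16 (MulEquiv.inv A) (inv_pow_sixteen A) c = MulEquiv.inv A ^ parity c :=
    pow_eq_pow_mod _ h2
  rw [this]
  rcases parity_eq c with h | h <;> simp [h]

/-- The parameter group `Hol(C_p) × (ZMod 16)ˣ` for the automorphisms of `C_p ⋊ C16`. -/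
abbrev AutParam (p : ℕ) : Type := Hol (Multiplicative (ZMod p)) × (ZMod 16)ˣ

/-- The endomorphism `(x, c) ↦ (α x * b ^ [c], k c)` of `C_p ⋊ C16` with parameters
`((b, α), k)`. -/
def autHom {p : ℕ} (q : AutParam p) : CpRtimesC16 p →* CpRtimesC16 p where
  toFun g := ⟨q.1.right g.left * q.1.left ^ parity g.right,
    Multiplicative.ofAdd ((q.2 : ZMod 16) * g.right.toAdd)⟩
  map_one' := by ext <;> simp [parity]
  map_mul' g h := by
    apply SemidirectProduct.ext
    · simp only [SemidirectProduct.mul_left, SemidirectProduct.mul_right, act_apply, parity_smul,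
        parity_mul]
      rcases parity_eq g.right with hg | hg <;> rcases parity_eq h.right with hh | hh <;>
        simp [hg, hh, mul_assoc, mul_comm, mul_left_comm]
    · simp only [SemidirectProduct.mul_right, toAdd_mul, mul_add, ofAdd_add]

lemma autHom_one {p : ℕ} : autHom (1 : AutParam p) = MonoidHom.id _ := by
  ext g <;> simp [autHom, parity]

lemma autHom_mul {p : ℕ} (q r : AutParam p) : autHom (q * r) = (autHom q).comp (autHom r) := by
  refine MonoidHom.ext fun g => SemidirectProduct.ext ?_ ?_
  · simp only [autHom, MonoidHom.coe_mk, OneHom.coe_mk, MonoidHom.comp_apply, parity_smul]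
    rcases parity_eq g.right with hg | hg <;>
      simp [hg, mul_comm, mul_left_comm]
  · simp only [autHom, MonoidHom.coe_mk, OneHom.coe_mk, MonoidHom.comp_apply, Prod.snd_mul,
      Units.val_mul, toAdd_ofAdd, mul_assoc]

/-- The action of the parameter group on `C_p ⋊ C16` by automorphisms. -/
def autMap (p : ℕ) : AutParam p →* MulAut (CpRtimesC16 p) where
  toFun q := (autHom q).toMulEquiv (autHom q⁻¹)
    (by rw [← autHom_mul, inv_mul_cancel, autHom_one])
    (by rw [← autHom_mul, mul_inv_cancel, autHom_one])
  map_one' := MulEquiv.ext fun g => DFunLike.congr_fun autHom_one g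
  map_mul' q r := MulEquiv.ext fun g => DFunLike.congr_fun (autHom_mul q r) g

lemma autMap_apply {p : ℕ} (q : AutParam p) (g : CpRtimesC16 p) :
    autMap p q g = ⟨q.1.right g.left * q.1.left ^ parity g.right,
      Multiplicative.ofAdd ((q.2 : ZMod 16) * g.right.toAdd)⟩ := rfl

/-- The chosen generator of `C16`. -/
abbrev gen16 : Multiplicative (ZMod 16) := Multiplicative.ofAdd 1

lemma parity_gen16 : parity gen16 = 1 := by decide

lemma autMap_inl {p : ℕ} (q : AutParam p) (x : Multiplicative (ZMod p)) :
    autMap p q (SemidirectProduct.inl x) = SemidirectProduct.inl (q.1.right x) := by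
  rw [autMap_apply]; ext <;> simp [parity]

lemma autMap_gen {p : ℕ} (q : AutParam p) :
    autMap p q (SemidirectProduct.inr gen16) = ⟨q.1.left, Multiplicative.ofAdd (q.2 : ZMod 16)⟩ := by
  rw [autMap_apply]; ext <;> simp [parity_gen16]

lemma autMap_injective (p : ℕ) : Function.Injective (autMap p) := by
  intro q r h
  have h1 : q.1.right = r.1.right := MulEquiv.ext fun x => by
    have := DFunLike.congr_fun h (SemidirectProduct.inl x)
    rw [autMap_inl, autMap_inl] at this
    exact SemidirectProduct.inl_injective this
  have h2 := DFunLike.congr_fun h (SemidirectProduct.inr gen16)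
  rw [autMap_gen, autMap_gen] at h2
  have h3 := congrArg SemidirectProduct.left h2
  have h4 := congrArg SemidirectProduct.right h2
  exact Prod.ext (SemidirectProduct.ext h3 h1) (Units.ext (Multiplicative.ofAdd.injective h4))

lemma pow_sixteen_C16 (c : Multiplicative (ZMod 16)) : c ^ 16 = 1 := by
  revert c; decide

lemma gen16_pow (c : Multiplicative (ZMod 16)) : gen16 ^ c.toAdd.val = c := by
  revert c; decide

lemma exists_pow_sixteen {p : ℕ} (hodd : Odd p) (x : Multiplicative (ZMod p)) :
    ∃ y, y ^ 16 = x := by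
  have hc : Nat.Coprime 16 p := (Nat.coprime_two_left.mpr hodd).pow_left 4
  refine ⟨Multiplicative.ofAdd (((16 : ℕ) : ZMod p)⁻¹ * x.toAdd), ?_⟩
  apply Multiplicative.toAdd.injective
  rw [toAdd_pow, toAdd_ofAdd, nsmul_eq_mul, ← mul_assoc, ZMod.coe_mul_inv_eq_one 16 hc, one_mul]

lemma autMap_surjective {p : ℕ} (hp : p.Prime) (hodd : Odd p) :
    Function.Surjective (autMap p) := by
  intro f
  have : NeZero p := ⟨hp.ne_zero⟩
  have hright (x : Multiplicative (ZMod p)) : (f (SemidirectProduct.inl x)).right = 1 := by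
    obtain ⟨y, rfl⟩ := exists_pow_sixteen hodd x
    rw [map_pow, map_pow, ← SemidirectProduct.rightHom_eq_right, map_pow, pow_sixteen_C16]
  have hinl (x : Multiplicative (ZMod p)) :
      SemidirectProduct.inl (f (SemidirectProduct.inl x)).left = f (SemidirectProduct.inl x) :=
    SemidirectProduct.ext rfl (hright x).symm
  let a : Multiplicative (ZMod p) →* Multiplicative (ZMod p) :=
    { toFun := fun x => (f (SemidirectProduct.inl x)).left
      map_one' := by simp
      map_mul' := fun x y => by
        apply SemidirectProduct.inl_injective
          (φ := zmodHom 16 (MulEquiv.inv (Multiplicative (ZMod p))) (inv_pow_sixteen _))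
        rw [hinl, map_mul, map_mul, map_mul, hinl, hinl] }
  have ha : Function.Injective a := fun x y h => by
    apply SemidirectProduct.inl_injective
      (φ := zmodHom 16 (MulEquiv.inv (Multiplicative (ZMod p))) (inv_pow_sixteen _))
    apply f.injective
    rw [← hinl x, ← hinl y]
    exact congrArg _ h
  let α : MulAut (Multiplicative (ZMod p)) :=
    MulEquiv.ofBijective a (Finite.injective_iff_bijective.mp ha)
  set b := f (SemidirectProduct.inr gen16) with hb
  -- A preimage of the generator exhibits an inverse of the `C16`-component of `b`.
  have hk : IsUnit (b.right.toAdd : ZMod 16) := by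
    obtain ⟨g, hg⟩ := f.surjective (SemidirectProduct.inr gen16)
    rw [← SemidirectProduct.inl_left_mul_inr_right g, ← gen16_pow g.right, map_pow, map_mul,
      map_pow, ← hb] at hg
    have := congrArg SemidirectProduct.rightHom hg
    rw [map_mul, map_pow, SemidirectProduct.rightHom_eq_right, hright, one_mul] at this
    have h' := congrArg Multiplicative.toAdd this
    rw [toAdd_pow, nsmul_eq_mul] at h'
    exact IsUnit.of_mul_eq_one _ ((mul_comm _ _).trans h')
  obtain ⟨k, hk⟩ := hk
  let q : AutParam p := (⟨b.left, α⟩, k)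
  have h1 (x : Multiplicative (ZMod p)) :
      autMap p q (SemidirectProduct.inl x) = f (SemidirectProduct.inl x) := by
    rw [autMap_inl]; exact hinl x
  have h2 : autMap p q (SemidirectProduct.inr gen16) = f (SemidirectProduct.inr gen16) := by
    rw [autMap_gen]; exact SemidirectProduct.ext rfl (congrArg Multiplicative.ofAdd hk)
  refine ⟨q, MulEquiv.ext fun g => ?_⟩
  rw [← SemidirectProduct.inl_left_mul_inr_right g, ← gen16_pow g.right, map_pow, map_mul,
    map_mul, map_pow, map_pow, h1, h2]

/-- The class of `3` modulo 16, a unit of order 4. -/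
def unitThree : (ZMod 16)ˣ := ⟨3, 11, by decide, by decide⟩

/-- The homomorphism `C4 × C2 → (ZMod 16)ˣ` sending the two generators to `3` and `-1`. -/
def unitsHom : Multiplicative (ZMod 4) × Multiplicative (ZMod 2) →* (ZMod 16)ˣ :=
  (zmodHom 4 unitThree (by decide)).coprod (zmodHom 2 (-1) (by decide))

lemma unitsHom_bijective : Function.Bijective unitsHom := by
  constructor
  · rw [injective_iff_map_eq_one]; decide
  · unfold Function.Surjective; decide

/-- For an odd prime `p`, the automorphism group of `C_p ⋊ C16` (generator of `C16` acting
by inversion) is isomorphic to `Hol(C_p) × C4 × C2`. -/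
theorem aut_Cp_rtimes_C16 (p : ℕ) (hp : p.Prime) (hodd : Odd p) :
    Nonempty (MulAut (CpRtimesC16 p) ≃*
      Hol (Multiplicative (ZMod p)) × Multiplicative (ZMod 4) × Multiplicative (ZMod 2)) := by
  exact ⟨(MulEquiv.ofBijective (autMap p)
    ⟨autMap_injective p, autMap_surjective hp hodd⟩).symm.trans
      ((MulEquiv.refl _).prodCongr (MulEquiv.ofBijective unitsHom unitsHom_bijective).symm)⟩
end

section
/- Let p be an odd prime and let G = C_p ⋊ D8 be the semidirect product of the cyclic group of order p by the dihedral group D8 of order 16, where D8 acts on C_p through the homomorphism D8 → C2 killing the rotation subgroup, with every reflection acting on C_p by inversion x ↦ -x. Then the automorphism group of G is isomorphic to Hol(C_p) × Hol(C8). -/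
lemma inv_mul_inv_eq_one (G : Type*) [CommGroup G] :
    MulEquiv.inv G * MulEquiv.inv G = 1 :=
  MulEquiv.ext fun x => inv_inv x

/-- The action of the dihedral group `D8` on `C_p` through the quotient `D8 → C2` killing
the rotation subgroup: rotations act trivially, every reflection acts by inversion. -/
def d8Action (p : ℕ) : DihedralGroup 8 →* MulAut (Multiplicative (ZMod p)) where
  toFun g :=
    match g with
    | .r _ => 1
    | .sr _ => MulEquiv.inv (Multiplicative (ZMod p))
  map_one' := rfl
  map_mul' a b := by
    rcases a with i | i <;> rcases b with j | j <;>
      simp [DihedralGroup.r_mul_r, DihedralGroup.r_mul_sr, DihedralGroup.sr_mul_r,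
        DihedralGroup.sr_mul_sr, inv_mul_inv_eq_one]

/-- The group `C_p ⋊ D8`, with `D8` acting on `C_p` through `D8 → C2`: reflections act by
inversion `x ↦ -x` (multiplicatively `x ↦ x⁻¹`), rotations act trivially. -/
abbrev CpRtimesD8 (p : ℕ) : Type :=
  SemidirectProduct (Multiplicative (ZMod p)) (DihedralGroup 8) (d8Action p)

open Multiplicative SemidirectProduct

/-- The underlying function of the action of a pair of affine maps on `C_p ⋊ D8`: the linear parts
act on the pairs `(x, r i)`, the affine maps themselves on the pairs `(x, sr i)`. -/
def holFun (p : ℕ) (h : Hol (Multiplicative (ZMod p)) × Hol (Multiplicative (ZMod 8))) :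
    CpRtimesD8 p → CpRtimesD8 p
  | ⟨x, .r i⟩ => ⟨h.1.right x, .r (toAdd (h.2.right (ofAdd i)))⟩
  | ⟨x, .sr i⟩ => ⟨h.1.left * h.1.right x, .sr (toAdd (h.2.left * h.2.right (ofAdd i)))⟩

section mul

variable {p : ℕ} (x y : Multiplicative (ZMod p)) (i j : ZMod 8)

lemma mk_r_mul_r : (⟨x, .r i⟩ * ⟨y, .r j⟩ : CpRtimesD8 p) = ⟨x * y, .r (i + j)⟩ := rfl

lemma mk_r_mul_sr : (⟨x, .r i⟩ * ⟨y, .sr j⟩ : CpRtimesD8 p) = ⟨x * y, .sr (j - i)⟩ := rfl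

lemma mk_sr_mul_r : (⟨x, .sr i⟩ * ⟨y, .r j⟩ : CpRtimesD8 p) = ⟨x * y⁻¹, .sr (i + j)⟩ := rfl

lemma mk_sr_mul_sr : (⟨x, .sr i⟩ * ⟨y, .sr j⟩ : CpRtimesD8 p) = ⟨x * y⁻¹, .r (j - i)⟩ := rfl

lemma mk_inj (g k : DihedralGroup 8) :
    (⟨x, g⟩ : CpRtimesD8 p) = ⟨y, k⟩ ↔ x = y ∧ g = k := SemidirectProduct.ext_iff

lemma mk_one : (⟨1, .r 0⟩ : CpRtimesD8 p) = 1 := rfl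

lemma mk_r_pow (n : ℕ) : (⟨x, .r i⟩ : CpRtimesD8 p) ^ n = ⟨x ^ n, .r (n * i)⟩ := by
  induction n with
  | zero => simp
  | succ n ih =>
    rw [pow_succ, ih, mk_r_mul_r, pow_succ]
    push_cast
    ring_nf

end mul

lemma holFun_mul (p : ℕ) (h : Hol (Multiplicative (ZMod p)) × Hol (Multiplicative (ZMod 8)))
    (u v : CpRtimesD8 p) : holFun p h (u * v) = holFun p h u * holFun p h v := by
  obtain ⟨x, i | i⟩ := u <;> obtain ⟨y, j | j⟩ := v
  · simp [-mk_eq_inl_mul_inr, mk_r_mul_r, holFun, ofAdd_add]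
  · simp only [mk_r_mul_sr, holFun, map_mul, ofAdd_sub, map_div, toAdd_mul, toAdd_div, mk_inj,
      DihedralGroup.sr.injEq]
    exact ⟨mul_left_comm _ _ _, by abel⟩
  · simp only [mk_sr_mul_r, holFun, map_mul, map_inv, ofAdd_add, toAdd_mul, mk_inj,
      DihedralGroup.sr.injEq]
    exact ⟨(mul_assoc _ _ _).symm, by abel⟩
  · simp only [mk_sr_mul_sr, holFun, map_mul, map_inv, ofAdd_sub, map_div, toAdd_mul, toAdd_div,
      mk_inj, DihedralGroup.r.injEq, mul_inv]
    refine ⟨?_, by abel⟩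
    rw [mul_mul_mul_comm, mul_inv_cancel, one_mul]

lemma holFun_comp (p : ℕ) (h k : Hol (Multiplicative (ZMod p)) × Hol (Multiplicative (ZMod 8)))
    (u : CpRtimesD8 p) : holFun p (h * k) u = holFun p h (holFun p k u) := by
  obtain ⟨x, i | i⟩ := u
  · simp [-mk_eq_inl_mul_inr, holFun]
  · simp [-mk_eq_inl_mul_inr, holFun, mul_assoc]

lemma holFun_one (p : ℕ) (u : CpRtimesD8 p) : holFun p 1 u = u := by
  obtain ⟨x, i | i⟩ := u <;> simp [holFun]

/-- The action of `Hol C_p × Hol C8` on `C_p ⋊ D8` by automorphisms. -/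
def holHom (p : ℕ) :
    Hol (Multiplicative (ZMod p)) × Hol (Multiplicative (ZMod 8)) →* MulAut (CpRtimesD8 p) where
  toFun h :=
    { toFun := holFun p h
      invFun := holFun p h⁻¹
      left_inv := fun u => by rw [← holFun_comp, inv_mul_cancel, holFun_one]
      right_inv := fun u => by rw [← holFun_comp, mul_inv_cancel, holFun_one]
      map_mul' := holFun_mul p h }
  map_one' := MulEquiv.ext (holFun_one p)
  map_mul' h k := MulEquiv.ext (holFun_comp p h k)

lemma holHom_apply (p : ℕ) (h : Hol (Multiplicative (ZMod p)) × Hol (Multiplicative (ZMod 8)))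
    (u : CpRtimesD8 p) : holHom p h u = holFun p h u := rfl

lemma holHom_injective (p : ℕ) : Function.Injective (holHom p) := by
  rw [injective_iff_map_eq_one]
  rintro ⟨⟨a, α⟩, ⟨b, β⟩⟩ h
  have key : ∀ u, holFun p ⟨⟨a, α⟩, ⟨b, β⟩⟩ u = u := fun u => by rw [← holHom_apply, h]; rfl
  have hα : α = 1 := MulEquiv.ext fun x => congrArg SemidirectProduct.left (key ⟨x, .r 0⟩)
  have hβ : β = 1 := MulEquiv.ext fun i => by
    simpa [holFun] using key ⟨1, .r (toAdd i)⟩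
  have hab := key ⟨1, .sr 0⟩
  simp only [holFun, map_one, mul_one, ofAdd_zero, mk_inj, DihedralGroup.sr.injEq] at hab
  obtain ⟨rfl, hb⟩ := hab
  obtain rfl : b = 1 := hb
  rw [hα, hβ]
  rfl

section surjective

variable {p : ℕ}

/-- Elements `(x, sr i)` are involutions, so an element with nontrivial square is not mapped to one
of them. -/
lemma map_of_sq_ne_one (f : MulAut (CpRtimesD8 p)) (u : CpRtimesD8 p) (hu : u * u ≠ 1) :
    ∃ y j, f u = ⟨y, .r j⟩ := by
  rcases h : f u with ⟨y, j | j⟩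
  · exact ⟨y, j, rfl⟩
  · refine absurd (f.injective ?_) hu
    rw [map_mul, h, mk_sr_mul_sr, map_one, mul_inv_cancel, sub_self, mk_one]

lemma map_rot (f : MulAut (CpRtimesD8 p)) (x : Multiplicative (ZMod p)) (i : ZMod 8) :
    ∃ y j, f ⟨x, .r i⟩ = ⟨y, .r j⟩ := by
  have hc : ∀ i : ZMod 8, ∃ c : ZMod 8, (i - c) + (i - c) ≠ 0 ∧ c + c ≠ 0 := by decide
  have hne : ∀ (y : Multiplicative (ZMod p)) (c : ZMod 8), c + c ≠ 0 →
      (⟨y, .r c⟩ * ⟨y, .r c⟩ : CpRtimesD8 p) ≠ 1 := by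
    intro y c hc h
    rw [mk_r_mul_r, ← mk_one, mk_inj, DihedralGroup.r.injEq] at h
    exact hc h.2
  obtain ⟨c, h1, h2⟩ := hc i
  obtain ⟨y, j, hy⟩ := map_of_sq_ne_one f _ (hne x _ h1)
  obtain ⟨z, k, hz⟩ := map_of_sq_ne_one f _ (hne 1 _ h2)
  refine ⟨y * z, j + k, ?_⟩
  rw [← mk_r_mul_r, ← hy, ← hz, ← map_mul, mk_r_mul_r, mul_one, sub_add_cancel]

lemma map_refl (f : MulAut (CpRtimesD8 p)) (x : Multiplicative (ZMod p)) (i : ZMod 8) :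
    ∃ y j, f ⟨x, .sr i⟩ = ⟨y, .sr j⟩ := by
  rcases h : f ⟨x, .sr i⟩ with ⟨y, j | j⟩
  · obtain ⟨z, k, hz⟩ := map_rot f⁻¹ y j
    rw [← h, MulAut.inv_apply_self, mk_inj] at hz
    exact absurd hz.2 (by simp)
  · exact ⟨y, j, rfl⟩

lemma map_inl (hp : p.Coprime 8) (f : MulAut (CpRtimesD8 p)) (x : Multiplicative (ZMod p)) :
    ∃ y, f ⟨x, .r 0⟩ = ⟨y, .r 0⟩ := by
  obtain ⟨y, j, h⟩ := map_rot f x 0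
  have hx : x ^ p = 1 := by
    apply toAdd.injective
    simp
  have h2 : f ⟨x, .r 0⟩ ^ p = 1 := by
    rw [← map_pow, mk_r_pow, hx, mul_zero, mk_one, map_one]
  rw [h, mk_r_pow, ← mk_one, mk_inj, DihedralGroup.r.injEq] at h2
  have hj : j = 0 := ((ZMod.isUnit_iff_coprime p 8).2 hp).mul_right_eq_zero.1 h2.2
  exact ⟨y, hj ▸ h⟩

lemma map_r (hp : p.Coprime 8) (f : MulAut (CpRtimesD8 p)) (i : ZMod 8) :
    ∃ j, f ⟨1, .r i⟩ = ⟨1, .r j⟩ := by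
  obtain ⟨y, j, h⟩ := map_rot f 1 i
  have hi : ((8 : ℕ) : ZMod 8) * i = 0 := by rw [ZMod.natCast_self, zero_mul]
  have h2 : f ⟨1, .r i⟩ ^ 8 = 1 := by
    rw [← map_pow, mk_r_pow, hi, one_pow, mk_one, map_one]
  rw [h, mk_r_pow, ← mk_one, mk_inj] at h2
  have h3 : ((8 : ℕ) : ZMod p) * toAdd y = 0 := by
    rw [← nsmul_eq_mul, ← toAdd_pow, h2.1, toAdd_one]
  have hy : y = 1 := ((ZMod.isUnit_iff_coprime 8 p).2 hp.symm).mul_right_eq_zero.1 h3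
  exact ⟨j, hy ▸ h⟩

lemma holHom_surjective [NeZero p] (hp : p.Coprime 8) : Function.Surjective (holHom p) := by
  intro f
  choose α hα using map_inl hp f
  choose β hβ using map_r hp f
  obtain ⟨a, b, hab⟩ := map_refl f 1 0
  have hα_mul : ∀ x y, α (x * y) = α x * α y := fun x y => by
    have h := map_mul f ⟨x, .r 0⟩ ⟨y, .r 0⟩
    rw [mk_r_mul_r, add_zero, hα, hα, hα, mk_r_mul_r, mk_inj] at h
    exact h.1
  have hβ_add : ∀ i j, β (i + j) = β i + β j := fun i j => by
    have h := map_mul f ⟨1, .r i⟩ ⟨1, .r j⟩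
    rw [mk_r_mul_r, mul_one, hβ, hβ, hβ, mk_r_mul_r, mk_inj, DihedralGroup.r.injEq] at h
    exact h.2
  have hα_inj : Function.Injective α := fun x y hxy => by
    have h : f ⟨x, .r 0⟩ = f ⟨y, .r 0⟩ := by rw [hα, hα, hxy]
    exact congrArg SemidirectProduct.left (f.injective h)
  have hβ_inj : Function.Injective β := fun i j hij => by
    have h : f ⟨1, .r i⟩ = f ⟨1, .r j⟩ := by rw [hβ, hβ, hij]
    exact DihedralGroup.r.inj (congrArg SemidirectProduct.right (f.injective h))
  have : Finite (Multiplicative (ZMod p)) := inferInstanceAs (Finite (ZMod p))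
  let α' : MulAut (Multiplicative (ZMod p)) :=
    MulEquiv.ofBijective (MonoidHom.mk' α hα_mul) (Finite.injective_iff_bijective.1 hα_inj)
  let β' : MulAut (Multiplicative (ZMod 8)) := AddEquiv.toMultiplicative
    (AddEquiv.ofBijective (AddMonoidHom.mk' β hβ_add) (Finite.injective_iff_bijective.1 hβ_inj))
  have hrot : ∀ x i, f ⟨x, .r i⟩ = ⟨α x, .r (β i)⟩ := fun x i => by
    have h := map_mul f ⟨x, .r 0⟩ ⟨1, .r i⟩
    rwa [mk_r_mul_r, mul_one, zero_add, hα, hβ, mk_r_mul_r, mul_one, zero_add] at h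
  refine ⟨⟨⟨a, α'⟩, ⟨ofAdd b, β'⟩⟩, MulEquiv.ext ?_⟩
  rintro ⟨x, i | i⟩
  · exact (hrot x i).symm
  · have h := map_mul f ⟨1, .sr 0⟩ ⟨x⁻¹, .r i⟩
    rw [mk_sr_mul_r, inv_inv, one_mul, zero_add, hab, hrot, mk_sr_mul_r] at h
    have hinv : (α x⁻¹)⁻¹ = α x := by
      have := map_inv α' x
      exact inv_eq_iff_eq_inv.2 this
    rw [h, hinv]
    rfl

end surjective

/-- For an odd prime `p`, the automorphism group of `C_p ⋊ D8` is isomorphic to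
`Hol(C_p) × Hol(C8)`. -/
theorem aut_Cp_rtimes_D8 (p : ℕ) (hp : p.Prime) (hodd : Odd p) :
    Nonempty (MulAut (CpRtimesD8 p) ≃*
      Hol (Multiplicative (ZMod p)) × Hol (Multiplicative (ZMod 8))) := by
  have : NeZero p := ⟨hp.ne_zero⟩
  have h8 : p.Coprime 8 := (Nat.coprime_two_right.2 hodd).pow_right 3
  exact ⟨(MulEquiv.ofBijective (holHom p) ⟨holHom_injective p, holHom_surjective h8⟩).symm⟩
end

section
/- The group S4 × S3 is a complete group: its center is trivial and every automorphism of S4 × S3 is inner (so that the natural map from S4 × S3 to its automorphism group is an isomorphism). -/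
/-!
Let `f` be an automorphism of `S4 × S3`. The elements `(s, 1)` with `s` a transposition are
characterised among the involutions by commuting with an element of order 3 but with no element of
order 4, so `f` permutes them (`map_swap_fst`). The images of the three Coxeter generators of `S4`
are therefore transpositions `(a i, 1)`, and they satisfy the same commutation pattern as the
generators; such a triple in `S4` is simultaneously conjugate to the standard one
(`exists_conj_four`). In particular the `a i` have trivial common centraliser. The images of the
Coxeter generators of `S3` commute with all `(a i, 1)`, so they lie in `1 × S3`, where they are two
non-commuting involutions, again simultaneously conjugate to the standard pair
(`exists_conj_three`). Hence `f` agrees with an inner automorphism on a generating set.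

The facts used about the individual groups `S4` and `S3` are finite checks.
-/

open Equiv

-- Deciding nested implications over finite types needs long chains of `Decidable` instances.
set_option synthInstance.maxHeartbeats 400000
set_option synthInstance.maxSize 2000

local notation "S4" => Equiv.Perm (Fin 4)
local notation "S3" => Equiv.Perm (Fin 3)

/-- The `i`-th Coxeter generator `(i i+1)` of the symmetric group on `Fin (n + 1)`. -/
def coxeterSwap {n : ℕ} (i : Fin n) : Equiv.Perm (Fin (n + 1)) := swap i.castSucc i.succ

lemma center_four : ∀ a : S4, (∀ b, a * b = b * a) → a = 1 := by decide +kernel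

lemma center_three : ∀ a : S3, (∀ b, a * b = b * a) → a = 1 := by decide +kernel

/-- The centraliser of a transposition in `S4` is a Klein four-group. -/
lemma sq_of_commute_swap : ∀ i : Fin 3, ∀ c : S4, coxeterSwap i * c = c * coxeterSwap i →
    c * c = 1 := by decide +kernel

lemma sq_of_pow_four_three : ∀ c : S3, c ^ 4 = 1 → c ^ 2 = 1 := by decide +kernel

/-- The trivial element and the double transpositions commute with a 4-cycle. -/
lemma isSwap_of_centralizer : ∀ a : S4, a * a = 1 →
    (∀ c, c ^ 4 = 1 → a * c = c * a → c ^ 2 = 1) → ∃ i j, i ≠ j ∧ a = swap i j := by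
  decide +kernel

lemma eq_one_of_commute_swap : ∀ i j : Fin 4, i ≠ j → ∀ p : S4, p ^ 3 = 1 →
    swap i j * p = p * swap i j → p = 1 := by decide +kernel

lemma eq_one_of_commute_order_three : ∀ b q : S3, b * b = 1 → q ^ 3 = 1 → q ≠ 1 →
    b * q = q * b → b = 1 := by decide +kernel

lemma exists_conj_four : ∀ i j : Fin 4, i ≠ j → ∀ k l : Fin 4, k ≠ l →
    swap i j * swap k l ≠ swap k l * swap i j → ∀ m n : Fin 4, m ≠ n →
    swap k l * swap m n ≠ swap m n * swap k l →
    swap i j * swap m n = swap m n * swap i j → swap i j ≠ swap m n →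
    ∃ g : S4, g * coxeterSwap 0 * g⁻¹ = swap i j ∧ g * coxeterSwap 1 * g⁻¹ = swap k l ∧
      g * coxeterSwap 2 * g⁻¹ = swap m n := by decide +kernel

lemma exists_conj_three : ∀ a b : S3, a * a = 1 → b * b = 1 → a * b ≠ b * a →
    ∃ g : S3, g * coxeterSwap 0 * g⁻¹ = a ∧ g * coxeterSwap 1 * g⁻¹ = b := by decide +kernel

lemma eq_one_of_commute_coxeter : ∀ c : S4, (∀ i : Fin 3, coxeterSwap i * c = c * coxeterSwap i) →
    c = 1 := by decide +kernel

lemma closure_coxeter (n : ℕ) :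
    Subgroup.closure (Set.range (coxeterSwap (n := n))) = ⊤ := by
  have h := Equiv.Perm.mclosure_swap_castSucc_succ n
  rw [eq_top_iff]
  intro x _
  have hx : x ∈ Submonoid.closure (Set.range (coxeterSwap (n := n))) := by
    unfold coxeterSwap
    rw [h]
    trivial
  exact Subgroup.le_closure_toSubmonoid _ hx

/-- An automorphism of `S4 × S3` maps a Coxeter generator of `S4` to a transposition of `S4`. -/
lemma map_swap_fst (f : MulAut (S4 × S3)) (i : Fin 3) :
    ∃ k l : Fin 4, k ≠ l ∧ f (coxeterSwap i, 1) = (swap k l, 1) := by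
  have hinv : f (coxeterSwap i, 1) * f (coxeterSwap i, 1) = 1 := by
    rw [← map_mul]
    simp [coxeterSwap, Prod.mk_eq_one]
  obtain ⟨k, l, hkl, ha⟩ := isSwap_of_centralizer (f (coxeterSwap i, 1)).1
    (congrArg Prod.fst hinv) (by
      intro c hc hac
      obtain ⟨z, hz⟩ := f.surjective (c, 1)
      have hz4 : z ^ 4 = 1 := f.injective (by rw [map_pow, hz, map_one]; simp [hc])
      have hcomm : (coxeterSwap i, 1) * z = z * (coxeterSwap i, 1) := f.injective (by
        rw [map_mul, map_mul, hz]
        exact Prod.ext hac (by simp))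
      have hz2 : z ^ 2 = 1 := Prod.ext
        (by simpa [pow_two] using sq_of_commute_swap i z.1 (congrArg Prod.fst hcomm))
        (sq_of_pow_four_three z.2 (congrArg Prod.snd hz4))
      have := congrArg f hz2
      rw [map_pow, hz, map_one] at this
      exact congrArg Prod.fst this)
  refine ⟨k, l, hkl, Prod.ext ha ?_⟩
  -- The image of the 3-cycle of `S3` has order 3 and commutes with `f (coxeterSwap i, 1)`.
  let r : S3 := coxeterSwap 0 * coxeterSwap 1
  have hr3 : r ^ 3 = 1 := by decide +kernel
  have hr1 : r ≠ 1 := by decide +kernel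
  have h3 : f (1, r) ^ 3 = 1 := by
    rw [← map_pow]
    simp [hr3, Prod.mk_eq_one]
  have hcomm : f (coxeterSwap i, 1) * f (1, r) = f (1, r) * f (coxeterSwap i, 1) := by
    rw [← map_mul, ← map_mul]
    simp
  have hp : (f (1, r)).1 = 1 := eq_one_of_commute_swap k l hkl _ (congrArg Prod.fst h3)
    (by rw [← ha]; exact congrArg Prod.fst hcomm)
  refine eq_one_of_commute_order_three _ (f (1, r)).2 (congrArg Prod.snd hinv)
    (congrArg Prod.snd h3) (fun hq => hr1 ?_) (congrArg Prod.snd hcomm)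
  have : f (1, r) = 1 := Prod.ext hp hq
  rw [map_eq_one_iff f f.injective] at this
  exact congrArg Prod.snd this

/-- A homomorphism out of `S4 × S3` is determined by its values on the Coxeter generators. -/
lemma hom_ext_coxeter {G : Type*} [Group G] {f g : S4 × S3 →* G}
    (h4 : ∀ i : Fin 3, f (coxeterSwap i, 1) = g (coxeterSwap i, 1))
    (h3 : ∀ i : Fin 2, f (1, coxeterSwap i) = g (1, coxeterSwap i)) : f = g := by
  have e4 : f.comp (MonoidHom.inl S4 S3) = g.comp (MonoidHom.inl S4 S3) :=
    MonoidHom.eq_of_eqOn_dense (closure_coxeter 3) (by rintro _ ⟨i, rfl⟩; exact h4 i)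
  have e3 : f.comp (MonoidHom.inr S4 S3) = g.comp (MonoidHom.inr S4 S3) :=
    MonoidHom.eq_of_eqOn_dense (closure_coxeter 2) (by rintro _ ⟨i, rfl⟩; exact h3 i)
  ext ⟨a, b⟩
  have hab : ((a, b) : S4 × S3) = (a, 1) * (1, b) := by simp
  rw [hab, map_mul, map_mul]
  exact congrArg₂ (· * ·) (DFunLike.congr_fun e4 a) (DFunLike.congr_fun e3 b)

lemma exists_eq_conj (f : MulAut (S4 × S3)) : ∃ g, f = MulAut.conj g := by
  obtain ⟨i, j, hij, h0⟩ := map_swap_fst f 0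
  obtain ⟨k, l, hkl, h1⟩ := map_swap_fst f 1
  obtain ⟨m, n, hmn, h2⟩ := map_swap_fst f 2
  have key : ∀ x y : S4 × S3, x * y ≠ y * x → f x * f y ≠ f y * f x := by
    intro x y hxy h
    rw [← map_mul, ← map_mul] at h
    exact hxy (f.injective h)
  obtain ⟨g, hg0, hg1, hg2⟩ := exists_conj_four i j hij k l hkl
    (by
      have := key (coxeterSwap 0, 1) (coxeterSwap 1, 1) (by decide +kernel)
      rw [h0, h1] at this
      simpa using this) m n hmn
    (by
      have := key (coxeterSwap 1, 1) (coxeterSwap 2, 1) (by decide +kernel)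
      rw [h1, h2] at this
      simpa using this)
    (by
      have : f ((coxeterSwap 0, 1) * (coxeterSwap 2, 1)) =
        f ((coxeterSwap 2, 1) * (coxeterSwap 0, 1)) := congrArg f (by decide +kernel)
      rw [map_mul, map_mul, h0, h2] at this
      simpa using this)
    (by
      intro h
      have : ((coxeterSwap 0, 1) : S4 × S3) = (coxeterSwap 2, 1) :=
        f.injective (by rw [h0, h2, h])
      revert this
      decide +kernel)
  have hs : ∀ i : Fin 3, f (coxeterSwap i, 1) = (g * coxeterSwap i * g⁻¹, 1) := by
    intro i
    fin_cases i
    · exact h0.trans (by simp [← hg0])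
    · exact h1.trans (by simp [← hg1])
    · exact h2.trans (by simp [← hg2])
  have hfst : ∀ t : S3, (f (1, t)).1 = 1 := by
    intro t
    have : g⁻¹ * (f (1, t)).1 * g = 1 := by
      apply eq_one_of_commute_coxeter
      intro i
      have h : f (coxeterSwap i, 1) * f (1, t) = f (1, t) * f (coxeterSwap i, 1) := by
        rw [← map_mul, ← map_mul]
        simp
      rw [hs] at h
      have h' : g * coxeterSwap i * g⁻¹ * (f (1, t)).1 = (f (1, t)).1 * (g * coxeterSwap i * g⁻¹) :=
        congrArg Prod.fst h
      calc _ = g⁻¹ * (g * coxeterSwap i * g⁻¹ * (f (1, t)).1) * g := by group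
        _ = _ := by rw [h']; group
    calc _ = g * (g⁻¹ * (f (1, t)).1 * g) * g⁻¹ := by group
      _ = 1 := by rw [this]; group
  have hinv : ∀ j : Fin 2, (f (1, coxeterSwap j)).2 * (f (1, coxeterSwap j)).2 = 1 := by
    intro j
    have : f (1, coxeterSwap j) * f (1, coxeterSwap j) = 1 := by
      rw [← map_mul]
      simp [coxeterSwap, Prod.mk_eq_one]
    exact congrArg Prod.snd this
  obtain ⟨t, ht0, ht1⟩ := exists_conj_three _ _ (hinv 0) (hinv 1) (fun h =>
    key (1, coxeterSwap 0) (1, coxeterSwap 1) (by decide +kernel)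
      (Prod.ext (by simp [hfst]) h))
  refine ⟨(g, t), ?_⟩
  have : f.toMonoidHom = (MulAut.conj (g, t)).toMonoidHom := by
    apply hom_ext_coxeter
    · intro i
      exact (hs i).trans (by simp)
    · intro i
      refine Prod.ext ((hfst _).trans (by simp)) ?_
      fin_cases i
      · exact ht0.symm
      · exact ht1.symm
  exact MulEquiv.ext fun x => DFunLike.congr_fun this x

lemma eq_one_of_central (z : S4 × S3) (hz : ∀ x, z * x = x * z) : z = 1 :=
  Prod.ext (center_four _ fun b => congrArg Prod.fst (hz (b, 1)))
    (center_three _ fun b => congrArg Prod.snd (hz (1, b)))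

/-- `S4 × S3` is a complete group: its center is trivial, every automorphism is inner, and
hence the natural conjugation map to the automorphism group is an isomorphism. -/
theorem s4_prod_s3_complete :
    Subgroup.center (Equiv.Perm (Fin 4) × Equiv.Perm (Fin 3)) = ⊥ ∧
      (∀ f : MulAut (Equiv.Perm (Fin 4) × Equiv.Perm (Fin 3)),
        ∃ g : Equiv.Perm (Fin 4) × Equiv.Perm (Fin 3), f = MulAut.conj g) ∧
      Function.Bijective
        (MulAut.conj : Equiv.Perm (Fin 4) × Equiv.Perm (Fin 3) →*
          MulAut (Equiv.Perm (Fin 4) × Equiv.Perm (Fin 3))) := by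
  refine ⟨?_, exists_eq_conj, ?_, fun f => (exists_eq_conj f).imp fun _ h => h.symm⟩
  · rw [eq_bot_iff]
    intro z hz
    exact eq_one_of_central z fun x => (Subgroup.mem_center_iff.mp hz x).symm
  · rw [injective_iff_map_eq_one]
    intro z hz
    refine eq_one_of_central z fun x => ?_
    have : z * x * z⁻¹ = x := DFunLike.congr_fun hz x
    exact mul_inv_eq_iff_eq_mul.mp this
end
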